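/- (Ribbon Littlewood–Richardson-type rule.) Fix n ≥ 1, partitions λ and μ, and N ≥ 1. Let s_λ(A_q(x)) be the Schur polynomial s_λ evaluated at the nN variables {q^{2j}x_i : 1 ≤ i ≤ N, 0 ≤ j ≤ n−1}. Then in ℤ[q][x_1,…,x_N] one has s_λ(A_q(x)) · 𝒢_μ(x_1,…,x_N;q) = Σ_ν c^λ_{ν/μ}(q) · 𝒢_ν(x_1,…,x_N;q), where the sum is over all partitions ν ⊇ μ with ν/μ tileable by n-ribbons and |ν/μ| = n|λ|. -/

import Mathlib

/-!
The ribbon functions are treated through operators that add and remove ribbons.  A Young diagram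
is encoded by its boundary path (`prof`), equivalently by a Maya diagram of beads on `ℤ`; adding an
`n`-ribbon moves a bead from some position `a` to `a + n`, and the spin of the ribbon is the number
of beads jumped over.  Let `u_a` be the spin-weighted operator adding the ribbon at `a` and `d_a`
its transpose.  A horizontal `n`-ribbon strip is the same as a sequence of ribbons added at
increasing positions (`tiling_remove`, `tiling_insert`), so that adding strips, a ribbon having
weight `x`, is the operator `U(x) = ∏_a (1 + x u_a)`, and removing strips is its transpose `D(y)`.

The operators `u_i` and `d_j` commute for `i ≠ j` (`up_dn_comm`).  For `i = j`, exchanging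
`1 + y d_i` and `1 + x u_i` is possible at the price of shifting by one step a diagonal operator
between them, whose eigenvalue `∏_{s ≤ j < n} (1 - q^{2j} x y)` depends on the number `s` of beads
in a window of length `n` (`local_exchange`).  Far to the right the window is empty and far to the
left it is full, so the exchanges telescope to
`∏_{j < n} (1 - q^{2j} x y) · D(y) U(x) = U(x) D(y)` (`Dprod_Uprod`, `Df_Uf`).  Applied to the
iterated strip sums which are the ribbon functions, started from a core, this yields the Pieri rule
(`pieri`): multiplication of `𝒢_μ` by `h_k(A_q(x))` gives `∑_ν q^{spin(ν/μ)} 𝒢_ν` over the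
horizontal strips `ν/μ` with `k` ribbons.

Iterating it, the coefficient of `𝒢_ν` in `h_α(A_q(x)) 𝒢_μ` is the coefficient of `x^α` in
`𝒢_{ν/μ}` (`pieri_iterate`).  The Kostka matrix is unitriangular, so `s_λ` is an integral linear
combination of the `h_α`; the same combination of the coefficients of `x^α` in `𝒢_{ν/μ}` extracts
its Schur coefficient at `λ`, which is `c^λ_{ν/μ}(q)`.  Finally, if `ν` carries a nonzero
coefficient then `ν` and `μ` have the same core (`nCore_eq`, by confluence of ribbon removal).
-/

open scoped Classical

noncomputable section

/-- A cell of a Young/skew diagram: (row, column). -/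
abbrev Cell : Type := ℕ × ℕ

/-- Two cells are adjacent if they share an edge. -/
def Adj (a b : Cell) : Prop :=
  (a.1 = b.1 ∧ (a.2 + 1 = b.2 ∨ b.2 + 1 = a.2)) ∨
  (a.2 = b.2 ∧ (a.1 + 1 = b.1 ∨ b.1 + 1 = a.1))

/-- Reachability inside a finite set of cells via edge-adjacency. -/
def Reach (S : Finset Cell) (a b : Cell) : Prop :=
  Relation.ReflTransGen (fun x y => y ∈ S ∧ Adj x y) a b

/-- A set of cells is connected if any two of its cells are joined by a path inside it. -/
def CellsConnected (S : Finset Cell) : Prop :=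
  ∀ a ∈ S, ∀ b ∈ S, Reach S a b

/-- The connected component of the cell `c` inside `S`. -/
def component (S : Finset Cell) (c : Cell) : Finset Cell :=
  S.filter (fun d => Reach S c d)

/-- The number of connected components of a set of cells. -/
def numComponents (S : Finset Cell) : ℕ :=
  (S.image (fun c => component S c)).card

/-- `S` contains no 2 × 2 square of cells. -/
def NoSquare (S : Finset Cell) : Prop :=
  ¬ ∃ i j : ℕ, (i, j) ∈ S ∧ (i + 1, j) ∈ S ∧ (i, j + 1) ∈ S ∧ (i + 1, j + 1) ∈ S

/-- `S` is (the set of cells of) a skew shape `λ/μ`. -/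
def IsSkewCells (S : Finset Cell) : Prop :=
  ∃ lam mu : YoungDiagram, mu ≤ lam ∧ S = lam.cells \ mu.cells

/-- An `n`-ribbon: a connected skew shape with `n` cells and no 2 × 2 square. -/
def IsRibbon (n : ℕ) (S : Finset Cell) : Prop :=
  S.card = n ∧ CellsConnected S ∧ NoSquare S ∧ IsSkewCells S

/-- The spin of a ribbon: the number of rows it occupies, minus 1. -/
def ribbonSpin (S : Finset Cell) : ℕ := (S.image Prod.fst).card - 1

/-- `T` is a tiling of the cell set `S` by `n`-ribbons. -/
def IsTilingOf (n : ℕ) (S : Finset Cell) (T : Finset (Finset Cell)) : Prop :=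
  (∀ R ∈ T, IsRibbon n R) ∧
  ((T : Set (Finset Cell)).Pairwise fun A B => Disjoint A B) ∧
  T.biUnion id = S

/-- `S` can be tiled by `n`-ribbons. -/
def Tileable (n : ℕ) (S : Finset Cell) : Prop := ∃ T, IsTilingOf n S T

/-- Total spin of a tiling. -/
def tilingSpin (T : Finset (Finset Cell)) : ℕ := ∑ R ∈ T, ribbonSpin R

/-- The maximum spin of an `n`-ribbon tiling of `S`. -/
def maxSpin (n : ℕ) (S : Finset Cell) : ℕ :=
  sSup {m : ℕ | ∃ T, IsTilingOf n S T ∧ tilingSpin T = m}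

/-- `c` is the topright-most cell of `R`: maximal column and, among those, minimal row. -/
def TopRightCell (R : Finset Cell) (c : Cell) : Prop :=
  c ∈ R ∧ ∀ d ∈ R, d.2 ≤ c.2 ∧ (d.2 = c.2 → c.1 ≤ d.1)

/-- Every ribbon of the tiling `T` has its topright-most cell touching the northern
edge of the shape `S`: the cell directly above it is not in `S`. -/
def NorthernCond (S : Finset Cell) (T : Finset (Finset Cell)) : Prop :=
  ∀ R ∈ T, ∀ c : Cell, TopRightCell R c → (c.1 = 0 ∨ (c.1 - 1, c.2) ∉ S)

/-- `T` is a tiling of `S` witnessing that `S` is a horizontal `n`-ribbon strip. -/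
def IsHStripTiling (n : ℕ) (S : Finset Cell) (T : Finset (Finset Cell)) : Prop :=
  IsTilingOf n S T ∧ NorthernCond S T

/-- `S` is a horizontal `n`-ribbon strip. -/
def IsHStripCells (n : ℕ) (S : Finset Cell) : Prop :=
  IsSkewCells S ∧ ∃ T, IsHStripTiling n S T

/-- The spin of a horizontal `n`-ribbon strip (via its tiling, which is unique when it exists). -/
def stripSpin (n : ℕ) (S : Finset Cell) : ℕ :=
  if h : ∃ T, IsHStripTiling n S T then tilingSpin h.choose else 0

/-- Conjugate (transpose) of a set of cells. -/
def swapCells (S : Finset Cell) : Finset Cell := S.image Prod.swap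

/-- `S` is a vertical `n`-ribbon strip: its conjugate is a horizontal one. -/
def IsVStripCells (n : ℕ) (S : Finset Cell) : Prop :=
  IsHStripCells n (swapCells S)

/-- The spin of a vertical `n`-ribbon strip with `k = |S|/n` ribbons:
`k (n-1)` minus the spin of the conjugate strip. -/
def vStripSpin (n : ℕ) (S : Finset Cell) : ℕ :=
  (S.card / n) * (n - 1) - stripSpin n (swapCells S)

/-- `T` is a tiling of `S` witnessing that `S` is a vertical `n`-ribbon strip. -/
def IsVStripTiling (n : ℕ) (S : Finset Cell) (T : Finset (Finset Cell)) : Prop :=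
  IsHStripTiling n (swapCells S) (T.image swapCells)

/-- `mu` is obtained from `lam` by removing a single `n`-ribbon. -/
def RibbonStep (n : ℕ) (lam mu : YoungDiagram) : Prop :=
  mu ≤ lam ∧ IsRibbon n (lam.cells \ mu.cells)

/-- `delta` is the `n`-core of `lam`: it is obtained from `lam` by successively removing
`n`-ribbons, and no further `n`-ribbon can be removed from it. -/
def IsNCoreOf (n : ℕ) (delta lam : YoungDiagram) : Prop :=
  Relation.ReflTransGen (RibbonStep n) lam delta ∧ ∀ mu, ¬ RibbonStep n delta mu

/-- The `n`-core of a partition (defined via choice; it exists and is unique). -/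
def nCore (n : ℕ) (lam : YoungDiagram) : YoungDiagram :=
  if h : ∃ d, IsNCoreOf n d lam then h.choose else lam

/-- A semistandard `n`-ribbon tableau of shape `lam/mu` with entries in `{1, …, N}`:
a chain of partitions `mu = μ⁰ ⊆ μ¹ ⊆ ⋯ ⊆ μᴺ = lam` where each `μⁱ/μ^{i-1}` is a (possibly
empty) horizontal `n`-ribbon strip, together with the (unique) tiling of each strip. -/
structure RibbonTableau (n N : ℕ) (lam mu : YoungDiagram) where
  chain : Fin (N + 1) → YoungDiagram
  chain_zero : chain 0 = mu
  chain_last : chain (Fin.last N) = lam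
  chain_mono : ∀ i : Fin N, chain i.castSucc ≤ chain i.succ
  tiling : Fin N → Finset (Finset Cell)
  tiling_strip : ∀ i : Fin N,
    IsHStripTiling n ((chain i.succ).cells \ (chain i.castSucc).cells) (tiling i)

/-- The spin of a ribbon tableau. -/
def RibbonTableau.spin {n N : ℕ} {lam mu : YoungDiagram} (T : RibbonTableau n N lam mu) : ℕ :=
  ∑ i : Fin N, tilingSpin (T.tiling i)

/-- A standard ribbon tableau: each letter occurs exactly once. -/
def RibbonTableau.IsStandard {n N : ℕ} {lam mu : YoungDiagram}
    (T : RibbonTableau n N lam mu) : Prop :=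
  ∀ i : Fin N, (T.tiling i).card = 1

/-- The monomial `q^{spin T} x^{weight T}` attached to a ribbon tableau. -/
def tableauTerm {n N : ℕ} {lam mu : YoungDiagram} (T : RibbonTableau n N lam mu) :
    MvPolynomial (Fin N) (Polynomial ℤ) :=
  MvPolynomial.C (Polynomial.X ^ T.spin) *
    ∏ i : Fin N, MvPolynomial.X i ^ (T.tiling i).card

/-- The ribbon function `𝒢_{lam/mu}(x₁, …, x_N; q)`. -/
def ribbonFn (n N : ℕ) (lam mu : YoungDiagram) : MvPolynomial (Fin N) (Polynomial ℤ) :=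
  ∑ᶠ T : RibbonTableau n N lam mu, tableauTerm T

/-- `𝒢_lam = 𝒢_{lam/(n-core of lam)}`. -/
def G (n N : ℕ) (lam : YoungDiagram) : MvPolynomial (Fin N) (Polynomial ℤ) :=
  ribbonFn n N lam (nCore n lam)

/-- The Schur polynomial `s_ν(x₁,…,x_N)`, realized as the `n = 1` ribbon function
(1-ribbon tableaux are exactly semistandard Young tableaux, and all spins are 0). -/
def schurPoly (N : ℕ) (nu : YoungDiagram) : MvPolynomial (Fin N) (Polynomial ℤ) :=
  ribbonFn 1 N nu ⊥

/-- The cells of the `i`-th horizontal strip of a decomposition. -/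
def stripCells {len : ℕ} (strip : Fin len → Finset (Finset Cell)) (i : Fin len) : Finset Cell :=
  (strip i).biUnion id

/-- The cells of `lam` together with the strips up to (and including) `i`. -/
def partialCells {len : ℕ} (strip : Fin len → Finset (Finset Cell)) (lam : YoungDiagram)
    (i : Fin len) : Finset Cell :=
  lam.cells ∪ (Finset.univ.filter (fun j => j ≤ i)).biUnion (fun j => stripCells strip j)

/-- The union of the cells of the strips strictly before `i`. -/
def prevCells {len : ℕ} (strip : Fin len → Finset (Finset Cell)) (i : Fin len) : Finset Cell :=
  (Finset.univ.filter (fun j => j < i)).biUnion (fun j => stripCells strip j)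

/-- Two cell sets touch if some cell of one is adjacent to some cell of the other. -/
def Touches (A B : Finset Cell) : Prop :=
  ∃ a ∈ A, ∃ b ∈ B, Adj a b

/-- `R` is the rightmost ribbon within the cell set `C`. -/
def IsRightmostIn (R C : Finset Cell) : Prop :=
  ∃ c ∈ R, ∀ d ∈ C, d.2 ≤ c.2

/-- A border `n`-ribbon strip of shape `mu/lam`: the connected skew shape `mu/lam` with a
distinguished decomposition into disjoint non-empty horizontal `n`-ribbon strips
`T₁, …, T_len` (each recorded by its tiling) such that each partial union is a skew shape,
`T₁` is connected, and for `i ≥ 2` every connected component `C` of `Tᵢ` is such that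
`C ∪ (T₁ ∪ ⋯ ∪ T_{i-1})` is not a horizontal `n`-ribbon strip and only the rightmost
ribbon of `C` touches `T₁ ∪ ⋯ ∪ T_{i-1}`. -/
structure BorderRibbonStrip (n : ℕ) (lam mu : YoungDiagram) where
  len : ℕ
  len_pos : 1 ≤ len
  strip : Fin len → Finset (Finset Cell)
  sub : lam ≤ mu
  connected : CellsConnected (mu.cells \ lam.cells)
  nonempty : ∀ i, (strip i).Nonempty
  disj : ∀ i j, i ≠ j → Disjoint (stripCells strip i) (stripCells strip j)
  cover : Finset.univ.biUnion (fun i => stripCells strip i) = mu.cells \ lam.cells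
  shape : ∀ i, ∃ nu : YoungDiagram, nu.cells = partialCells strip lam i
  hstrips : ∀ i, IsHStripTiling n (stripCells strip i) (strip i)
  first_connected : CellsConnected (stripCells strip ⟨0, len_pos⟩)
  comp_cond : ∀ i : Fin len, 0 < (i : ℕ) → ∀ c ∈ stripCells strip i,
    (¬ IsHStripCells n (component (stripCells strip i) c ∪ prevCells strip i)) ∧
    (∀ R ∈ strip i, R ⊆ component (stripCells strip i) c →
      Touches R (prevCells strip i) → IsRightmostIn R (component (stripCells strip i) c))

/-- The height of a border ribbon strip: total number of connected components of its
horizontal strips, minus 1. -/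
def BorderRibbonStrip.height {n : ℕ} {lam mu : YoungDiagram}
    (S : BorderRibbonStrip n lam mu) : ℕ :=
  (∑ i : Fin S.len, numComponents (stripCells S.strip i)) - 1

/-- The spin of a border ribbon strip. -/
def BorderRibbonStrip.spin {n : ℕ} {lam mu : YoungDiagram}
    (S : BorderRibbonStrip n lam mu) : ℕ :=
  ∑ i : Fin S.len, tilingSpin (S.strip i)

/-- The size (number of ribbons) of a border ribbon strip. -/
def BorderRibbonStrip.size {n : ℕ} {lam mu : YoungDiagram}
    (S : BorderRibbonStrip n lam mu) : ℕ :=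
  ∑ i : Fin S.len, (S.strip i).card

/-- `𝒳^{mu/lam}_k(q) = Σ_S (-1)^{h(S)} q^{s(S)}` over border `n`-ribbon strips of shape
`mu/lam` with `k` ribbons. -/
def chiX (n k : ℕ) (lam mu : YoungDiagram) : Polynomial ℤ :=
  ∑ᶠ S : BorderRibbonStrip n lam mu,
    if S.size = k then (-1) ^ S.height * Polynomial.X ^ S.spin else 0

/-- The complete homogeneous symmetric polynomial of degree `k` evaluated at the family `v`. -/
def hPoly {ι R : Type*} [Fintype ι] [DecidableEq ι] [CommSemiring R] (k : ℕ) (v : ι → R) : R :=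
  ∑ d : Sym ι k, ((d : Multiset ι).map v).prod

/-- The elementary symmetric polynomial of degree `k` evaluated at the family `v`. -/
def ePoly {ι R : Type*} [Fintype ι] [DecidableEq ι] [CommSemiring R] (k : ℕ) (v : ι → R) : R :=
  ∑ s ∈ Finset.univ.powersetCard k, ∏ i ∈ s, v i

/-- The alphabet `A_q(x) = {q^{2j} x_i : 1 ≤ i ≤ N, 0 ≤ j ≤ n-1}`. -/
def alphabetVal (n N : ℕ) : Fin N × Fin n → MvPolynomial (Fin N) (Polynomial ℤ) :=
  fun p => MvPolynomial.C (Polynomial.X ^ (2 * (p.2 : ℕ))) * MvPolynomial.X p.1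

/-- The Schur function `s_lam` evaluated at the alphabet `A_q(x)`,
i.e. the plethysm `s_lam[(1+q²+⋯+q^{2n-2})X]` in `N` variables. -/
def schurAlph (n N : ℕ) (lam : YoungDiagram) : MvPolynomial (Fin N) (Polynomial ℤ) :=
  MvPolynomial.aeval
    (fun t : Fin (n * N) => alphabetVal n N (Prod.swap (finProdFinEquiv.symm t)))
    (schurPoly (n * N) lam)

end

namespace RibbonLR

/-! ### Diagonal profiles of Young diagrams -/

/-- The content `column - row` of a cell, i.e. the diagonal it lies on. -/
def ct (c : Cell) : ℤ := (c.2 : ℤ) - c.1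

lemma exists_notMem_diag (μ : YoungDiagram) (d : ℤ) :
    ∃ t : ℕ, ((-d).toNat + t, d.toNat + t) ∉ μ := by
  refine ⟨μ.rowLen 0, fun h => ?_⟩
  have h2 : (0, d.toNat + μ.rowLen 0) ∈ μ := μ.up_left_mem (Nat.zero_le _) le_rfl h
  rw [YoungDiagram.mem_iff_lt_rowLen] at h2
  omega

/-- The profile of a Young diagram: `prof μ d` is the row index of the first cell of the
diagonal `d` lying outside `μ`.  The south-east boundary path of `μ`, read from bottom left to
top right, goes up at step `d` when `prof μ d = prof μ (d + 1) + 1` (a bead of the Maya diagram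
at position `d`) and right when `prof μ d = prof μ (d + 1)`. -/
noncomputable def prof (μ : YoungDiagram) (d : ℤ) : ℤ :=
  ((-d).toNat + Nat.find (exists_notMem_diag μ d) : ℕ)

lemma mem_iff_prof (μ : YoungDiagram) (c : Cell) : c ∈ μ ↔ (c.1 : ℤ) < prof μ (ct c) := by
  obtain ⟨i, j⟩ := c
  simp only [prof, ct]
  have key : ∀ t : ℕ, ((-((j : ℤ) - i)).toNat + t, ((j : ℤ) - i).toNat + t) ∈ μ ↔
      t < Nat.find (exists_notMem_diag μ ((j : ℤ) - i)) := by
    intro t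
    constructor
    · intro h
      by_contra hlt
      push Not at hlt
      exact Nat.find_spec (exists_notMem_diag μ ((j : ℤ) - i))
        (μ.up_left_mem (by omega) (by omega) h)
    · intro h
      have := Nat.find_min (exists_notMem_diag μ ((j : ℤ) - i)) h
      push Not at this
      exact this
  have h1 := key (min i j)
  have e1 : (-((j : ℤ) - i)).toNat + min i j = i := by omega
  have e2 : ((j : ℤ) - i).toNat + min i j = j := by omega
  rw [e1, e2] at h1
  rw [h1]
  omega

lemma mem_iff_prof' (μ : YoungDiagram) (i j : ℕ) :
    (i, j) ∈ μ ↔ (i : ℤ) < prof μ ((j : ℤ) - i) := mem_iff_prof μ (i, j)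

lemma prof_nonneg (μ : YoungDiagram) (d : ℤ) : 0 ≤ prof μ d := by
  unfold prof; positivity

lemma prof_ge (μ : YoungDiagram) (d : ℤ) : -d ≤ prof μ d := by
  unfold prof; omega

/-- Cells of a diagonal, addressed by an integral row index. -/
lemma exists_cell (i d : ℤ) (h0 : 0 ≤ i) (h1 : -d ≤ i) :
    ∃ c : Cell, (c.1 : ℤ) = i ∧ (c.2 : ℤ) = i + d ∧ ct c = d := by
  refine ⟨(i.toNat, (i + d).toNat), ?_, ?_, ?_⟩ <;> simp only [ct] <;> omega

lemma prof_step (μ : YoungDiagram) (d : ℤ) :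
    prof μ (d + 1) ≤ prof μ d ∧ prof μ d ≤ prof μ (d + 1) + 1 := by
  constructor
  · by_contra h
    push Not at h
    have h0 := prof_nonneg μ d
    have h1 := prof_ge μ d
    obtain ⟨⟨i, j⟩, hi, hj, hc⟩ := exists_cell (prof μ d) (d + 1) h0 (by omega)
    simp only at hi hj
    obtain ⟨j', rfl⟩ : ∃ j', j = j' + 1 := ⟨j - 1, by omega⟩
    have hm : (i, j' + 1) ∈ μ := by
      rw [mem_iff_prof, hc]; simp only; omega
    have hm2 : (i, j') ∈ μ := μ.up_left_mem le_rfl (by omega) hm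
    rw [mem_iff_prof'] at hm2
    have : (j' : ℤ) - i = d := by push_cast at hj; omega
    rw [this] at hm2
    omega
  · by_contra h
    push Not at h
    have h0 := prof_nonneg μ (d + 1)
    have h1 := prof_ge μ (d + 1)
    obtain ⟨⟨i, j⟩, hi, hj, hc⟩ := exists_cell (prof μ (d + 1) + 1) d (by omega) (by omega)
    simp only at hi hj
    obtain ⟨i', rfl⟩ : ∃ i', i = i' + 1 := ⟨i - 1, by omega⟩
    have hm : (i' + 1, j) ∈ μ := by
      rw [mem_iff_prof, hc]; simp only; omega
    have hm2 : (i', j) ∈ μ := μ.up_left_mem (by omega) le_rfl hm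
    rw [mem_iff_prof'] at hm2
    have : (j : ℤ) - i' = d + 1 := by push_cast at hi; omega
    rw [this] at hm2
    push_cast at hi
    omega

lemma prof_antitone (μ : YoungDiagram) : Antitone (prof μ) :=
  antitone_int_of_succ_le fun d => (prof_step μ d).1

lemma prof_le_add (μ : YoungDiagram) (d : ℤ) (k : ℕ) : prof μ d ≤ prof μ (d + k) + k := by
  induction k with
  | zero => simp
  | succ k ih =>
    have := (prof_step μ (d + k)).2
    push_cast
    rw [show d + ((k : ℤ) + 1) = d + k + 1 by ring]
    omega

lemma le_iff_prof {μ ν : YoungDiagram} : μ ≤ ν ↔ ∀ d, prof μ d ≤ prof ν d := by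
  constructor
  · intro h d
    by_contra hlt
    push Not at hlt
    obtain ⟨c, hi, -, hc⟩ := exists_cell (prof ν d) d (prof_nonneg _ _) (prof_ge _ _)
    have hm : c ∈ μ := by rw [mem_iff_prof, hc]; omega
    have hm2 : c ∈ ν := h hm
    rw [mem_iff_prof, hc] at hm2
    omega
  · intro h c hc
    have hc' : c ∈ μ := hc
    change c ∈ ν
    rw [mem_iff_prof] at hc' ⊢
    exact lt_of_lt_of_le hc' (h _)

lemma prof_ext {μ ν : YoungDiagram} (h : ∀ d, prof μ d = prof ν d) : μ = ν :=
  le_antisymm (le_iff_prof.2 fun d => (h d).le) (le_iff_prof.2 fun d => (h d).ge)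

lemma ct_lt_card {μ : YoungDiagram} {c : Cell} (h : c ∈ μ) :
    -(μ.card : ℤ) < ct c ∧ ct c < μ.card := by
  obtain ⟨i, j⟩ := c
  have h1 : (0, j) ∈ μ := μ.up_left_mem (Nat.zero_le _) le_rfl h
  have h2 : (i, 0) ∈ μ := μ.up_left_mem le_rfl (Nat.zero_le _) h
  rw [YoungDiagram.mem_iff_lt_rowLen, YoungDiagram.rowLen_eq_card] at h1
  rw [YoungDiagram.mem_iff_lt_colLen, YoungDiagram.colLen_eq_card] at h2
  have h3 : (μ.row 0).card ≤ μ.card := Finset.card_le_card (Finset.filter_subset _ _)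
  have h4 : (μ.col 0).card ≤ μ.card := Finset.card_le_card (Finset.filter_subset _ _)
  simp only [ct]
  omega

lemma prof_far_right {μ : YoungDiagram} {d : ℤ} (h : (μ.card : ℤ) ≤ d) : prof μ d = 0 := by
  by_contra hne
  have h0 := prof_nonneg μ d
  obtain ⟨c, hi, -, hc⟩ := exists_cell 0 d le_rfl (by omega)
  have hm : c ∈ μ := by rw [mem_iff_prof, hc]; omega
  have := ct_lt_card hm
  omega

lemma prof_far_left {μ : YoungDiagram} {d : ℤ} (h : d ≤ -(μ.card : ℤ)) : prof μ d = -d := by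
  by_contra hne
  have h0 := prof_ge μ d
  obtain ⟨c, hi, -, hc⟩ := exists_cell (-d) d (by omega) (by omega)
  have hm : c ∈ μ := by rw [mem_iff_prof, hc]; omega
  have := ct_lt_card hm
  omega

/-- Every function with the formal properties of a profile is the profile of a diagram. -/
lemma exists_of_prof (H : ℤ → ℤ) (B : ℕ) (h0 : ∀ d, 0 ≤ H d) (h1 : ∀ d, -d ≤ H d)
    (hs : ∀ d, H (d + 1) ≤ H d ∧ H d ≤ H (d + 1) + 1)
    (hr : ∀ d, (B : ℤ) ≤ d → H d = 0) (hl : ∀ d, d ≤ -(B : ℤ) → H d = -d) :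
    ∃ μ : YoungDiagram, ∀ d, prof μ d = H d := by
  have hanti : Antitone H := antitone_int_of_succ_le fun d => (hs d).1
  let S : Finset Cell :=
    ((Finset.range (2 * B)) ×ˢ (Finset.range (2 * B))).filter fun c => (c.1 : ℤ) < H (ct c)
  have hS : ∀ c : Cell, c ∈ S ↔ (c.1 : ℤ) < H (ct c) := by
    intro c
    simp only [S, Finset.mem_filter, Finset.mem_product, Finset.mem_range,
      and_iff_right_iff_imp]
    intro h
    have ha : ct c < B := by
      by_contra hh
      rw [hr _ (by omega)] at h
      omega
    have hb : -(B : ℤ) < ct c := by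
      by_contra hh
      rw [hl _ (by omega)] at h
      simp only [ct] at h
      omega
    have hc : H (ct c) ≤ B := by
      have := hanti hb.le
      rw [hl _ le_rfl] at this
      omega
    simp only [ct] at *
    omega
  have hlow : IsLowerSet (S : Set Cell) := by
    have hleft : ∀ i j : ℕ, (i, j + 1) ∈ S → (i, j) ∈ S := by
      intro i j h
      rw [hS] at h ⊢
      simp only [ct] at h ⊢
      have := (hs ((j : ℤ) - i)).1
      have e : ((j + 1 : ℕ) : ℤ) - i = (j : ℤ) - i + 1 := by push_cast; ring
      rw [e] at h
      omega
    have hup : ∀ i j : ℕ, (i + 1, j) ∈ S → (i, j) ∈ S := by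
      intro i j h
      rw [hS] at h ⊢
      simp only [ct] at h ⊢
      have := (hs ((j : ℤ) - (i + 1 : ℕ))).2
      have e : (j : ℤ) - (i + 1 : ℕ) + 1 = (j : ℤ) - i := by push_cast; ring
      rw [e] at this
      push_cast at h this
      omega
    have hleft' : ∀ i j k : ℕ, (i, j + k) ∈ S → (i, j) ∈ S := by
      intro i j k
      induction k with
      | zero => exact id
      | succ k ih => exact fun h => ih (hleft _ _ h)
    have hup' : ∀ i j k : ℕ, (i + k, j) ∈ S → (i, j) ∈ S := by
      intro i j k
      induction k with
      | zero => exact id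
      | succ k ih => exact fun h => ih (hup _ _ h)
    rintro ⟨i, j⟩ ⟨i', j'⟩ ⟨hi, hj⟩ h
    simp only at hi hj
    obtain ⟨k, rfl⟩ := Nat.exists_eq_add_of_le hi
    obtain ⟨l, rfl⟩ := Nat.exists_eq_add_of_le hj
    exact hleft' _ _ _ (hup' _ _ _ h)
  let μ : YoungDiagram := ⟨S, hlow⟩
  have hμ : ∀ c : Cell, c ∈ μ ↔ (c.1 : ℤ) < H (ct c) := hS
  refine ⟨μ, fun d => ?_⟩
  apply le_antisymm
  · by_contra hlt
    push Not at hlt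
    obtain ⟨c, hi, -, hc⟩ := exists_cell (H d) d (h0 _) (h1 _)
    have hm : c ∈ μ := by rw [mem_iff_prof, hc]; omega
    rw [hμ, hc] at hm
    omega
  · by_contra hlt
    push Not at hlt
    obtain ⟨c, hi, -, hc⟩ := exists_cell (prof μ d) d (prof_nonneg _ _) (prof_ge _ _)
    have hm : c ∈ μ := by rw [hμ, hc]; omega
    rw [mem_iff_prof, hc] at hm
    omega

/-! ### Adding a ribbon at a given position -/

/-- `ν` arises from `κ` by adding the `n`-ribbon with contents `a + 1, …, a + n`; equivalently,
a bead of the Maya diagram moves from `a` to `a + n`. -/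
def Rel (n : ℕ) (a : ℤ) (κ ν : YoungDiagram) : Prop :=
  ∀ d, prof ν d = prof κ d + if a < d ∧ d ≤ a + n then 1 else 0

lemma Rel.unique_right {n : ℕ} {a : ℤ} {κ ν ν' : YoungDiagram} (h : Rel n a κ ν)
    (h' : Rel n a κ ν') : ν = ν' :=
  prof_ext fun d => by rw [h d, h' d]

lemma Rel.unique_left {n : ℕ} {a : ℤ} {κ κ' ν : YoungDiagram} (h : Rel n a κ ν)
    (h' : Rel n a κ' ν) : κ = κ' :=
  prof_ext fun d => by have := h d; have := h' d; omega

lemma Rel.le {n : ℕ} {a : ℤ} {κ ν : YoungDiagram} (h : Rel n a κ ν) : κ ≤ ν :=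
  le_iff_prof.2 fun d => by rw [h d]; split_ifs <;> omega

lemma exists_add_iff {n : ℕ} (hn : 1 ≤ n) (a : ℤ) (κ : YoungDiagram) :
    (∃ ν, Rel n a κ ν) ↔
      prof κ a = prof κ (a + 1) + 1 ∧ prof κ (a + n) = prof κ (a + n + 1) := by
  constructor
  · rintro ⟨ν, h⟩
    have h1 := h a
    have h2 := h (a + 1)
    have h3 := h (a + n)
    have h4 := h (a + n + 1)
    rw [if_neg (by omega)] at h1 h4
    rw [if_pos (by omega)] at h2 h3
    have := prof_step κ a
    have := prof_step ν a
    have := prof_step κ (a + n)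
    have := prof_step ν (a + n)
    omega
  · rintro ⟨h1, h2⟩
    obtain ⟨ν, hν⟩ := exists_of_prof
      (fun d => prof κ d + if a < d ∧ d ≤ a + n then 1 else 0) (κ.card + a.natAbs + n + 1)
      (fun d => by have := prof_nonneg κ d; split_ifs <;> omega)
      (fun d => by have := prof_ge κ d; split_ifs <;> omega)
      (fun d => by
        have := prof_step κ d
        rcases eq_or_ne d a with rfl | hda
        · rw [if_pos (by omega), if_neg (by omega)]; omega
        rcases eq_or_ne d (a + n) with rfl | hdan
        · rw [if_neg (by omega), if_pos (by omega)]; omega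
        by_cases hd : a < d ∧ d ≤ a + n
        · rw [if_pos hd, if_pos (by omega)]; omega
        · rw [if_neg hd, if_neg (by omega)]; omega)
      (fun d hd => by rw [prof_far_right (by omega), if_neg (by omega)]; rfl)
      (fun d hd => by rw [prof_far_left (by omega), if_neg (by omega)]; omega)
    exact ⟨ν, hν⟩

lemma exists_remove_iff {n : ℕ} (hn : 1 ≤ n) (a : ℤ) (ν : YoungDiagram) :
    (∃ κ, Rel n a κ ν) ↔
      prof ν a = prof ν (a + 1) ∧ prof ν (a + n) = prof ν (a + n + 1) + 1 := by
  constructor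
  · rintro ⟨κ, h⟩
    have h1 := h a
    have h2 := h (a + 1)
    have h3 := h (a + n)
    have h4 := h (a + n + 1)
    rw [if_neg (by omega)] at h1 h4
    rw [if_pos (by omega)] at h2 h3
    have := prof_step κ a
    have := prof_step ν a
    have := prof_step κ (a + n)
    have := prof_step ν (a + n)
    omega
  · rintro ⟨h1, h2⟩
    obtain ⟨κ, hκ⟩ := exists_of_prof
      (fun d => prof ν d - if a < d ∧ d ≤ a + n then 1 else 0) (ν.card + a.natAbs + n + 1)
      (fun d => by
        have := prof_nonneg ν d
        split_ifs with hd
        · have := prof_antitone ν hd.2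
          have := prof_nonneg ν (a + n + 1)
          omega
        · omega)
      (fun d => by
        have := prof_ge ν d
        split_ifs with hd
        · -- the boundary path has slope at most one, so a diagonal without cells of `ν`
          -- to the right of the right step `a` would force `prof ν a < -a`
          have hle := prof_le_add ν (a + 1) (d - (a + 1)).toNat
          have e : a + 1 + ((d - (a + 1)).toNat : ℤ) = d := by omega
          rw [e] at hle
          have := prof_ge ν a
          omega
        · omega)
      (fun d => by
        have := prof_step ν d
        rcases eq_or_ne d a with rfl | hda
        · rw [if_pos (by omega), if_neg (by omega)]; omega
        rcases eq_or_ne d (a + n) with rfl | hdan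
        · rw [if_neg (by omega), if_pos (by omega)]; omega
        by_cases hd : a < d ∧ d ≤ a + n
        · rw [if_pos hd, if_pos (by omega)]; omega
        · rw [if_neg hd, if_neg (by omega)]; omega)
      (fun d hd => by rw [prof_far_right (by omega), if_neg (by omega)]; rfl)
      (fun d hd => by rw [prof_far_left (by omega), if_neg (by omega)]; omega)
    exact ⟨κ, fun d => by rw [hκ d]; omega⟩

/-! ### Ribbon Schur operators and their exchange relations -/

section Operators

variable {R : Type*} [CommRing R]

/-- The spin of a ribbon at position `a` added to or removed from `μ`: the number of beads
strictly between `a` and `a + n`. -/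
noncomputable def sp (n : ℕ) (a : ℤ) (μ : YoungDiagram) : ℕ :=
  (prof μ (a + 1) - prof μ (a + n)).toNat

lemma Rel.sp_eq {n : ℕ} (hn : 1 ≤ n) {a : ℤ} {κ ν : YoungDiagram} (h : Rel n a κ ν) :
    sp n a ν = sp n a κ := by
  have h1 := h (a + 1)
  have h2 := h (a + n)
  rw [if_pos (by omega)] at h1 h2
  unfold sp
  rw [h1, h2]
  congr 1
  ring

/-- The operator with matrix entries `q ^ spin` adding a ribbon at position `a`, acting on
functions of the resulting diagram. -/
noncomputable def up (n : ℕ) (q : R) (a : ℤ) (f : YoungDiagram → R) (ν : YoungDiagram) : R :=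
  if h : ∃ κ, Rel n a κ ν then q ^ sp n a ν * f h.choose else 0

/-- The transpose of `up`. -/
noncomputable def dn (n : ℕ) (q : R) (a : ℤ) (f : YoungDiagram → R) (κ : YoungDiagram) : R :=
  if h : ∃ ν, Rel n a κ ν then q ^ sp n a κ * f h.choose else 0

lemma up_of_rel {n : ℕ} {q : R} {a : ℤ} {f : YoungDiagram → R} {κ ν : YoungDiagram}
    (h : Rel n a κ ν) : up n q a f ν = q ^ sp n a ν * f κ := by
  have h' : ∃ κ, Rel n a κ ν := ⟨κ, h⟩
  rw [up, dif_pos h', h'.choose_spec.unique_left h]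

lemma dn_of_rel {n : ℕ} {q : R} {a : ℤ} {f : YoungDiagram → R} {κ ν : YoungDiagram}
    (h : Rel n a κ ν) : dn n q a f κ = q ^ sp n a κ * f ν := by
  have h' : ∃ ν, Rel n a κ ν := ⟨ν, h⟩
  rw [dn, dif_pos h', h'.choose_spec.unique_right h]

lemma up_of_not {n : ℕ} {q : R} {a : ℤ} {f : YoungDiagram → R} {ν : YoungDiagram}
    (h : ¬ ∃ κ, Rel n a κ ν) : up n q a f ν = 0 := by
  rw [up, dif_neg h]

lemma dn_of_not {n : ℕ} {q : R} {a : ℤ} {f : YoungDiagram → R} {κ : YoungDiagram}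
    (h : ¬ ∃ ν, Rel n a κ ν) : dn n q a f κ = 0 := by
  rw [dn, dif_neg h]

lemma up_add_mul (n : ℕ) (q : R) (a : ℤ) (f g : YoungDiagram → R) (y : R) (ν : YoungDiagram) :
    up n q a (fun μ => f μ + y * g μ) ν = up n q a f ν + y * up n q a g ν := by
  unfold up
  split_ifs <;> ring

lemma dn_add_mul (n : ℕ) (q : R) (a : ℤ) (f g : YoungDiagram → R) (y : R) (ν : YoungDiagram) :
    dn n q a (fun μ => f μ + y * g μ) ν = dn n q a f ν + y * dn n q a g ν := by
  unfold dn
  split_ifs <;> ring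

/-- Adding a ribbon at `i` and removing one at `j ≠ i` commute, weights included. -/
lemma up_dn_comm {n : ℕ} (hn : 1 ≤ n) (q : R) {i j : ℤ} (hij : i ≠ j) (f : YoungDiagram → R)
    (μ : YoungDiagram) : up n q i (dn n q j f) μ = dn n q j (up n q i f) μ := by
  by_cases hL : ∃ κ τ, Rel n i κ μ ∧ Rel n j κ τ
  · obtain ⟨κ, τ, h1, h2⟩ := hL
    have a1 := (exists_remove_iff hn i μ).1 ⟨κ, h1⟩
    have a2 := (exists_add_iff hn j κ).1 ⟨τ, h2⟩
    have hsj := prof_step μ j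
    have hsjn := prof_step μ (j + n)
    have e1 := h1 j
    have e2 := h1 (j + 1)
    have e3 := h1 (j + n)
    have e4 := h1 (j + n + 1)
    have hadd : prof μ j = prof μ (j + 1) + 1 ∧ prof μ (j + n) = prof μ (j + n + 1) := by
      split_ifs at e1 e2 e3 e4 <;> omega
    obtain ⟨ν, h3⟩ := (exists_add_iff hn j μ).2 hadd
    have h4 : Rel n i τ ν := fun d => by
      have := h1 d
      have := h2 d
      have := h3 d
      omega
    rw [up_of_rel h1, dn_of_rel h2, dn_of_rel h3, up_of_rel h4, ← mul_assoc, ← mul_assoc,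
      ← pow_add, ← pow_add]
    congr 2
    -- the two spins change by the same amount when the order is exchanged
    have g1 := h3 (i + 1)
    have g2 := h3 (i + n)
    have l1 := prof_antitone μ (show i + 1 ≤ i + n by omega)
    have l2 := prof_antitone ν (show i + 1 ≤ i + n by omega)
    have l3 := prof_antitone κ (show j + 1 ≤ j + n by omega)
    have l4 := prof_antitone μ (show j + 1 ≤ j + n by omega)
    unfold sp
    split_ifs at g1 g2 e2 e3 <;> omega
  · have hR : ¬ ∃ ν τ, Rel n j μ ν ∧ Rel n i τ ν := by
      rintro ⟨ν, τ, h3, h4⟩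
      apply hL
      have a1 := (exists_add_iff hn j μ).1 ⟨ν, h3⟩
      have a2 := (exists_remove_iff hn i ν).1 ⟨τ, h4⟩
      have hsj := prof_step μ i
      have hsjn := prof_step μ (i + n)
      have e1 := h3 i
      have e2 := h3 (i + 1)
      have e3 := h3 (i + n)
      have e4 := h3 (i + n + 1)
      have hrem : prof μ i = prof μ (i + 1) ∧ prof μ (i + n) = prof μ (i + n + 1) + 1 := by
        split_ifs at e1 e2 e3 e4 <;> omega
      obtain ⟨κ, h1⟩ := (exists_remove_iff hn i μ).2 hrem
      refine ⟨κ, τ, h1, fun d => ?_⟩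
      have := h1 d
      have := h3 d
      have := h4 d
      omega
    have e1 : up n q i (dn n q j f) μ = 0 := by
      by_cases h : ∃ κ, Rel n i κ μ
      · obtain ⟨κ, h⟩ := h
        rw [up_of_rel h, dn_of_not (fun ⟨τ, h'⟩ => hL ⟨κ, τ, h, h'⟩), mul_zero]
      · exact up_of_not h
    have e2 : dn n q j (up n q i f) μ = 0 := by
      by_cases h : ∃ ν, Rel n j μ ν
      · obtain ⟨ν, h⟩ := h
        rw [dn_of_rel h, up_of_not (fun ⟨τ, h'⟩ => hR ⟨ν, τ, h, h'⟩), mul_zero]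
      · exact dn_of_not h
    rw [e1, e2]

/-- The factor `1 + x u_a` of the strip-adding operator. -/
noncomputable def Uop (n : ℕ) (q x : R) (a : ℤ) (f : YoungDiagram → R) : YoungDiagram → R :=
  fun μ => f μ + x * up n q a f μ

/-- The factor `1 + y d_a` of the strip-removing operator. -/
noncomputable def Dop (n : ℕ) (q y : R) (a : ℤ) (f : YoungDiagram → R) : YoungDiagram → R :=
  fun μ => f μ + y * dn n q a f μ

lemma Uop_Dop_comm {n : ℕ} (hn : 1 ≤ n) (q x y : R) {i j : ℤ} (hij : i ≠ j)
    (f : YoungDiagram → R) :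
    Dop n q y j (Uop n q x i f) = Uop n q x i (Dop n q y j f) := by
  funext μ
  unfold Uop Dop
  rw [dn_add_mul, up_add_mul, up_dn_comm hn q hij]
  ring

/-- The product of the factors `1 - q^{2j} t` over `s ≤ j < n`. -/
noncomputable def eS (n : ℕ) (q t : R) (s : ℕ) : R := ∏ j ∈ Finset.Ico s n, (1 - q ^ (2 * j) * t)

lemma eS_succ {n : ℕ} (q t : R) {s : ℕ} (h : s < n) :
    eS n q t s = (1 - q ^ (2 * s) * t) * eS n q t (s + 1) := by
  unfold eS
  rw [Finset.prod_eq_prod_Ico_succ_bot h]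

/-- The number of beads in the window `i, …, i + n - 1`. -/
noncomputable def win (n : ℕ) (i : ℤ) (μ : YoungDiagram) : ℕ := (prof μ i - prof μ (i + n)).toNat

/-- The diagonal operator multiplying by `eS` of the number of beads in a window. -/
noncomputable def Em (n : ℕ) (q t : R) (i : ℤ) (f : YoungDiagram → R) : YoungDiagram → R :=
  fun μ => eS n q t (win n i μ) * f μ

/-- The local exchange relation: swapping `1 + y d_i` and `1 + x u_i` moves the window of the
diagonal operator between them by one step. -/
lemma local_exchange {n : ℕ} (hn : 1 ≤ n) (q x y : R) (i : ℤ) (f : YoungDiagram → R) :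
    Dop n q y i (Em n q (x * y) (i + 1) (Uop n q x i f)) =
      Uop n q x i (Em n q (x * y) i (Dop n q y i f)) := by
  funext μ
  have ei : i + 1 + n = i + n + 1 := by ring
  have hwin : ∀ ρ, win n (i + 1) ρ = (prof ρ (i + 1) - prof ρ (i + n + 1)).toNat := by
    intro ρ; unfold win; rw [ei]
  have hpair : ∀ κ ν, Rel n i κ ν →
      sp n i ν = sp n i κ ∧ sp n i κ < n ∧ win n (i + 1) κ = sp n i κ ∧
      win n i κ = sp n i κ + 1 ∧ win n (i + 1) ν = sp n i κ + 1 ∧ win n i ν = sp n i κ := by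
    intro κ ν h
    have a1 := (exists_remove_iff hn i ν).1 ⟨κ, h⟩
    have a2 := (exists_add_iff hn i κ).1 ⟨ν, h⟩
    have h1 := h (i + 1)
    have h2 := h (i + n)
    rw [if_pos (by omega)] at h1 h2
    have l1 := prof_antitone κ (show i + 1 ≤ i + n by omega)
    have l2 := prof_le_add κ (i + 1) (n - 1)
    have e : i + 1 + ((n - 1 : ℕ) : ℤ) = i + n := by omega
    rw [e] at l2
    refine ⟨h.sp_eq hn, ?_, ?_, ?_, ?_, ?_⟩ <;>
      simp only [hwin, sp] <;> try unfold win
    all_goals omega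
  by_cases hA : ∃ ν, Rel n i μ ν
  · obtain ⟨ν, h⟩ := hA
    obtain ⟨k1, k2, k3, k4, k5, k6⟩ := hpair μ ν h
    have hB : ¬ ∃ κ, Rel n i κ μ := by
      intro hB
      have a1 := (exists_remove_iff hn i μ).1 hB
      have a2 := (exists_add_iff hn i μ).1 ⟨ν, h⟩
      omega
    simp only [Uop, Dop, Em, dn_of_rel h, up_of_rel h, up_of_not hB, k1, k3, k4, k5]
    rw [eS_succ _ _ k2]
    ring
  · by_cases hB : ∃ κ, Rel n i κ μ
    · obtain ⟨κ, h⟩ := hB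
      obtain ⟨k1, k2, k3, k4, k5, k6⟩ := hpair κ μ h
      simp only [Uop, Dop, Em, dn_of_not hA, up_of_rel h, dn_of_rel h, k1, k4, k5, k6]
      rw [eS_succ _ _ k2]
      ring
    · simp only [Uop, Dop, Em, dn_of_not hA, up_of_not hB, mul_zero, add_zero]
      congr 2
      rw [hwin]
      have a1 := mt (exists_remove_iff hn i μ).2 hB
      have a2 := mt (exists_add_iff hn i μ).2 hA
      have := prof_step μ i
      have := prof_step μ (i + n)
      unfold win
      omega

/-- The operator `(1 + x u_{b+ℓ-1}) ⋯ (1 + x u_b)`. -/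
noncomputable def Uprod (n : ℕ) (q x : R) (b : ℤ) : ℕ → (YoungDiagram → R) → YoungDiagram → R
  | 0, f => f
  | ℓ + 1, f => Uop n q x (b + ℓ) (Uprod n q x b ℓ f)

/-- The operator `(1 + y d_b) ⋯ (1 + y d_{b+ℓ-1})`. -/
noncomputable def Dprod (n : ℕ) (q y : R) (b : ℤ) : ℕ → (YoungDiagram → R) → YoungDiagram → R
  | 0, f => f
  | ℓ + 1, f => Dprod n q y b ℓ (Dop n q y (b + ℓ) f)

lemma Dprod_Uop {n : ℕ} (hn : 1 ≤ n) (q x y : R) (b a : ℤ) (ℓ : ℕ) (h : b + ℓ ≤ a)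
    (f : YoungDiagram → R) :
    Dprod n q y b ℓ (Uop n q x a f) = Uop n q x a (Dprod n q y b ℓ f) := by
  induction ℓ generalizing f with
  | zero => rfl
  | succ ℓ ih =>
    push_cast at h
    rw [Dprod, Dprod, Uop_Dop_comm hn q x y (by omega), ih (by omega)]

lemma Uprod_Dop {n : ℕ} (hn : 1 ≤ n) (q x y : R) (b a : ℤ) (ℓ : ℕ) (h : b + ℓ ≤ a)
    (f : YoungDiagram → R) :
    Uprod n q x b ℓ (Dop n q y a f) = Dop n q y a (Uprod n q x b ℓ f) := by
  induction ℓ with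
  | zero => rfl
  | succ ℓ ih =>
    push_cast at h
    rw [Uprod, Uprod, ih (by omega), Uop_Dop_comm hn q x y (by omega)]

/-- The truncated commutation relation of the operators adding and removing horizontal strips. -/
lemma Dprod_Uprod {n : ℕ} (hn : 1 ≤ n) (q x y : R) (b : ℤ) (ℓ : ℕ) (f : YoungDiagram → R) :
    Dprod n q y b ℓ (Em n q (x * y) (b + ℓ) (Uprod n q x b ℓ f)) =
      Uprod n q x b ℓ (Em n q (x * y) b (Dprod n q y b ℓ f)) := by
  induction ℓ generalizing f with
  | zero => simp [Dprod, Uprod]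
  | succ ℓ ih =>
    rw [Dprod, Uprod, Uprod, Dprod]
    push_cast
    rw [← add_assoc, local_exchange hn, Dprod_Uop hn _ _ _ _ _ _ le_rfl,
      ← Uprod_Dop hn _ _ _ _ _ _ le_rfl, ih]

end Operators

/-! ### The geometry of a single ribbon -/

lemma cell_ext {c c' : Cell} (h : ct c = ct c') (h' : (c.1 : ℤ) = c'.1) : c = c' := by
  obtain ⟨i, j⟩ := c
  obtain ⟨i', j'⟩ := c'
  simp only [ct] at *
  ext <;> simp only <;> omega

lemma mem_skew {μ ν : YoungDiagram} {c : Cell} :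
    c ∈ ν.cells \ μ.cells ↔ c ∈ ν ∧ c ∉ μ := by
  simp [Finset.mem_sdiff, YoungDiagram.mem_cells]

lemma mem_of_le {μ : YoungDiagram} {c c' : Cell} (h1 : c.1 ≤ c'.1) (h2 : c.2 ≤ c'.2)
    (h : c' ∈ μ) : c ∈ μ := μ.up_left_mem h1 h2 h

/-- `R` consists of exactly one cell on each of the diagonals `a + 1, …, a + n`, in row `ρ d` on
the diagonal `d`, and cells on consecutive diagonals are adjacent. -/
structure RibAt (n : ℕ) (a : ℤ) (ρ : ℤ → ℤ) (R : Finset Cell) : Prop where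
  ex : ∀ d, a < d → d ≤ a + n → ∃ c ∈ R, ct c = d
  mem : ∀ c ∈ R, a < ct c ∧ ct c ≤ a + n ∧ (c.1 : ℤ) = ρ (ct c)
  step : ∀ d, a < d → d < a + n → ρ (d + 1) ≤ ρ d ∧ ρ d ≤ ρ (d + 1) + 1

lemma IsRibbon.ct_inj {n : ℕ} {R : Finset Cell} (h : IsRibbon n R) {c c' : Cell} (hc : c ∈ R)
    (hc' : c' ∈ R) (hcc : ct c = ct c') : c = c' := by
  obtain ⟨-, -, hsq, lam, mu, -, rfl⟩ := h
  have key : ∀ c c' : Cell, c ∈ lam.cells \ mu.cells → c' ∈ lam.cells \ mu.cells →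
      ct c = ct c' → ¬ c.1 < c'.1 := by
    rintro ⟨i, j⟩ ⟨i', j'⟩ hc hc' hcc hlt
    simp only [ct] at hcc hlt
    rw [mem_skew] at hc hc'
    have hin : ∀ k l, i ≤ k → j ≤ l → k ≤ i' → l ≤ j' → (k, l) ∈ lam.cells \ mu.cells := by
      intro k l h1 h2 h3 h4
      exact mem_skew.2 ⟨mem_of_le h3 h4 hc'.1, fun h => hc.2 (mem_of_le h1 h2 h)⟩
    exact hsq ⟨i, j, hin _ _ (by omega) (by omega) (by omega) (by omega),
      hin _ _ (by omega) (by omega) (by omega) (by omega),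
      hin _ _ (by omega) (by omega) (by omega) (by omega),
      hin _ _ (by omega) (by omega) (by omega) (by omega)⟩
  have h1 := key c c' hc hc' hcc
  have h2 := key c' c hc' hc hcc.symm
  exact cell_ext hcc (by omega)

/-- A path from content `≤ d` to content `> d` crosses from the diagonal `d` to `d + 1`. -/
lemma Reach.crossing {S : Finset Cell} {c c' : Cell} (h : Reach S c c') (hc : c ∈ S) :
    c' ∈ S ∧ ∀ d, ct c ≤ d → d < ct c' →
      ∃ e ∈ S, ∃ e' ∈ S, Adj e e' ∧ ct e = d ∧ ct e' = d + 1 := by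
  induction h with
  | refl => exact ⟨hc, fun d h1 h2 => by omega⟩
  | @tail e e' _ hstep ih =>
    refine ⟨hstep.1, fun d h1 h2 => ?_⟩
    by_cases hd : d < ct e
    · exact ih.2 d h1 hd
    · refine ⟨e, ih.1, e', hstep.1, hstep.2, ?_⟩
      have := hstep.2
      simp only [Adj, ct] at *
      omega

lemma exists_ribAt {n : ℕ} (hn : 1 ≤ n) {R : Finset Cell} (h : IsRibbon n R) :
    ∃ a ρ, RibAt n a ρ R := by
  have hne : R.Nonempty := Finset.card_pos.1 (by rw [h.1]; omega)
  obtain ⟨cm, hcm, hmin⟩ := Finset.exists_min_image R ct hne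
  obtain ⟨cM, hcM, hmax⟩ := Finset.exists_max_image R ct hne
  have hconn := h.2.1
  have hex : ∀ d, ct cm ≤ d → d ≤ ct cM → ∃ c ∈ R, ct c = d := by
    intro d h1 h2
    rcases eq_or_lt_of_le h2 with rfl | h2
    · exact ⟨cM, hcM, rfl⟩
    · obtain ⟨e, he, -, -, -, hd, -⟩ := (Reach.crossing (hconn cm hcm cM hcM) hcm).2 d h1 h2
      exact ⟨e, he, hd⟩
  have himg : R.image ct = Finset.Icc (ct cm) (ct cM) := by
    ext d
    simp only [Finset.mem_image, Finset.mem_Icc]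
    constructor
    · rintro ⟨c, hc, rfl⟩
      exact ⟨hmin c hc, hmax c hc⟩
    · rintro ⟨h1, h2⟩
      exact hex d h1 h2
  have hcard : (R.image ct).card = n := by
    rw [Finset.card_image_of_injOn (fun c hc c' hc' => IsRibbon.ct_inj h hc hc'), h.1]
  rw [himg, Int.card_Icc] at hcard
  have hex' : ∀ d, ∃ r : ℤ, ∀ c ∈ R, ct c = d → (c.1 : ℤ) = r := by
    intro d
    by_cases hd : ∃ c ∈ R, ct c = d
    · obtain ⟨c, hc, rfl⟩ := hd
      exact ⟨c.1, fun c' hc' hcc => by rw [IsRibbon.ct_inj h hc' hc hcc]⟩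
    · exact ⟨0, fun c hc hcd => absurd ⟨c, hc, hcd⟩ hd⟩
  choose ρ hρ using hex'
  refine ⟨ct cm - 1, ρ, ⟨fun d h1 h2 => hex d (by omega) (by omega), fun c hc => ?_, ?_⟩⟩
  · have := hmin c hc
    have := hmax c hc
    exact ⟨by omega, by omega, hρ _ c hc rfl⟩
  · intro d h1 h2
    obtain ⟨e, he, e', he', hadj, hd, hd'⟩ :=
      (Reach.crossing (hconn cm hcm cM hcM) hcm).2 d (by omega) (by omega)
    have r1 := hρ _ e he hd
    have r2 := hρ _ e' he' hd'
    rw [← r1, ← r2]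
    simp only [Adj, ct] at *
    omega

lemma RibAt.index_unique {n : ℕ} (hn : 1 ≤ n) {a a' : ℤ} {ρ ρ' : ℤ → ℤ} {R : Finset Cell}
    (h : RibAt n a ρ R) (h' : RibAt n a' ρ' R) : a = a' := by
  obtain ⟨c, hc, e⟩ := h.ex (a + 1) (by omega) (by omega)
  obtain ⟨c', hc', e'⟩ := h'.ex (a' + 1) (by omega) (by omega)
  have := h'.mem c hc
  have := h.mem c' hc'
  omega

lemma RibAt.rho_mono {n : ℕ} {a : ℤ} {ρ : ℤ → ℤ} {R : Finset Cell} (h : RibAt n a ρ R)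
    (d : ℤ) (k : ℕ) (hd : a < d) (hk : d + k ≤ a + n) :
    ρ (d + k) ≤ ρ d ∧ ρ d ≤ ρ (d + k) + k := by
  induction k with
  | zero => simp
  | succ k ih =>
    push_cast at hk ⊢
    have h1 := ih (by omega)
    have h2 := h.step (d + k) (by omega) (by omega)
    rw [show d + ((k : ℤ) + 1) = d + k + 1 by ring]
    omega

lemma RibAt.topRight {n : ℕ} {a : ℤ} {ρ : ℤ → ℤ} {R : Finset Cell} (h : RibAt n a ρ R)
    {c : Cell} (hc : c ∈ R) (hct : ct c = a + n) : TopRightCell R c := by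
  refine ⟨hc, fun e he => ?_⟩
  have h1 := h.mem c hc
  have h2 := h.mem e he
  have h3 := h.rho_mono (ct e) (a + n - ct e).toNat h2.1 (by omega)
  have e1 : ct e + ((a + n - ct e).toNat : ℤ) = ct c := by omega
  rw [e1, ← h1.2.2, ← h2.2.2] at h3
  simp only [ct] at *
  omega

lemma TopRightCell.eq {R : Finset Cell} {c c' : Cell} (h : TopRightCell R c)
    (h' : TopRightCell R c') : c = c' := by
  have h1 := h.2 c' h'.1
  have h2 := h'.2 c h.1
  ext <;> omega

lemma Rel.mem_iff {n : ℕ} {a : ℤ} {κ ν : YoungDiagram} (h : Rel n a κ ν) (c : Cell) :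
    c ∈ ν.cells \ κ.cells ↔ a < ct c ∧ ct c ≤ a + n ∧ (c.1 : ℤ) = prof κ (ct c) := by
  rw [mem_skew, mem_iff_prof, mem_iff_prof, h (ct c)]
  split_ifs <;> omega

lemma Rel.ribAt {n : ℕ} {a : ℤ} {κ ν : YoungDiagram} (h : Rel n a κ ν) :
    RibAt n a (prof κ) (ν.cells \ κ.cells) where
  ex d h1 h2 := by
    obtain ⟨c, hi, -, hc⟩ := exists_cell (prof κ d) d (prof_nonneg _ _) (prof_ge _ _)
    exact ⟨c, (h.mem_iff c).2 ⟨by omega, by omega, by rw [hc, hi]⟩, hc⟩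
  mem c hc := (h.mem_iff c).1 hc
  step d _ _ := prof_step κ d

lemma Rel.isRibbon {n : ℕ} {a : ℤ} {κ ν : YoungDiagram} (h : Rel n a κ ν) :
    IsRibbon n (ν.cells \ κ.cells) := by
  have hA := h.ribAt
  refine ⟨?_, ?_, ?_, ν, κ, h.le, rfl⟩
  · have hinj : Set.InjOn ct (ν.cells \ κ.cells : Finset Cell) := by
      intro c hc c' hc' hcc
      have h1 := hA.mem c hc
      have h2 := hA.mem c' hc'
      exact cell_ext hcc (by rw [h1.2.2, h2.2.2, hcc])
    have himg : (ν.cells \ κ.cells).image ct = Finset.Ioc a (a + n) := by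
      ext d
      simp only [Finset.mem_image, Finset.mem_Ioc]
      constructor
      · rintro ⟨c, hc, rfl⟩
        have := hA.mem c hc
        exact ⟨this.1, this.2.1⟩
      · rintro ⟨h1, h2⟩
        exact hA.ex d h1 h2
    rw [← Finset.card_image_of_injOn hinj, himg, Int.card_Ioc]
    omega
  · have key : ∀ k : ℕ, ∀ c ∈ ν.cells \ κ.cells, ∀ c' ∈ ν.cells \ κ.cells, ct c' = ct c + k →
        Reach (ν.cells \ κ.cells) c c' ∧ Reach (ν.cells \ κ.cells) c' c := by
      intro k
      induction k with
      | zero =>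
        intro c hc c' hc' hk
        have h1 := hA.mem c hc
        have h2 := hA.mem c' hc'
        have hk' : ct c = ct c' := by simpa using hk.symm
        have : c = c' := cell_ext hk' (by rw [h1.2.2, h2.2.2, hk'])
        subst this
        exact ⟨Relation.ReflTransGen.refl, Relation.ReflTransGen.refl⟩
      | succ k ih =>
        intro c hc c' hc' hk
        push_cast at hk
        have h1 := hA.mem c hc
        have h2 := hA.mem c' hc'
        obtain ⟨e, he, hee⟩ := hA.ex (ct c + k) (by omega) (by omega)
        have h3 := hA.mem e he
        have h4 := hA.step (ct e) (by omega) (by omega)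
        have e1 : ct c' = ct e + 1 := by omega
        rw [← e1, ← h2.2.2, ← h3.2.2] at h4
        have hadj : Adj e c' ∧ Adj c' e := by
          simp only [Adj, ct] at *
          omega
        obtain ⟨r1, r2⟩ := ih c hc e he hee
        exact ⟨r1.tail ⟨hc', hadj.1⟩, Relation.ReflTransGen.head ⟨he, hadj.2⟩ r2⟩
    intro c hc c' hc'
    rcases le_total (ct c) (ct c') with hle | hle
    · exact (key (ct c' - ct c).toNat c hc c' hc' (by omega)).1
    · exact (key (ct c - ct c').toNat c' hc' c hc (by omega)).2
  · rintro ⟨i, j, h1, -, -, h4⟩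
    have e1 := hA.mem _ h1
    have e2 := hA.mem _ h4
    have e3 : ct (i + 1, j + 1) = ct (i, j) := by simp [ct]
    rw [e3] at e2
    simp only at e1 e2
    push_cast at e2
    omega

lemma Rel.card_eq {n : ℕ} {a : ℤ} {κ ν : YoungDiagram} (h : Rel n a κ ν) :
    ν.card = κ.card + n := by
  have h1 := h.isRibbon.1
  have h2 : κ.cells ⊆ ν.cells := YoungDiagram.cells_subset_iff.2 h.le
  rw [Finset.card_sdiff_of_subset h2] at h1
  have h3 := Finset.card_le_card h2
  change ν.cells.card = κ.cells.card + n
  omega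

lemma Rel.ribbonSpin {n : ℕ} (hn : 1 ≤ n) {a : ℤ} {κ ν : YoungDiagram} (h : Rel n a κ ν) :
    ribbonSpin (ν.cells \ κ.cells) = sp n a ν := by
  have hA := h.ribAt
  have ivt : ∀ k : ℕ, ∀ r : ℤ, prof κ (a + 1 + k) ≤ r → r ≤ prof κ (a + 1) →
      ∃ j : ℕ, j ≤ k ∧ prof κ (a + 1 + j) = r := by
    intro k
    induction k with
    | zero =>
      intro r h1 h2
      refine ⟨0, le_rfl, ?_⟩
      simp only [Nat.cast_zero, add_zero] at *
      omega
    | succ k ih =>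
      intro r h1 h2
      by_cases hr : prof κ (a + 1 + k) ≤ r
      · obtain ⟨j, hj, e⟩ := ih r hr h2
        exact ⟨j, by omega, e⟩
      · refine ⟨k + 1, le_rfl, ?_⟩
        have := prof_step κ (a + 1 + k)
        push_cast at *
        rw [← add_assoc] at h1 ⊢
        omega
  have himg : (ν.cells \ κ.cells).image Prod.fst =
      Finset.Icc (prof κ (a + n)).toNat (prof κ (a + 1)).toNat := by
    ext r
    simp only [Finset.mem_image, Finset.mem_Icc]
    constructor
    · rintro ⟨c, hc, rfl⟩
      have h1 := hA.mem c hc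
      have h2 := prof_antitone κ h1.2.1
      have h3 := prof_antitone κ (show a + 1 ≤ ct c by omega)
      omega
    · rintro ⟨h1, h2⟩
      have h0 := prof_nonneg κ (a + 1)
      have h0' := prof_nonneg κ (a + n)
      obtain ⟨j, hj, e⟩ := ivt (n - 1) r
        (by rw [show a + 1 + ((n - 1 : ℕ) : ℤ) = a + n by omega]; omega) (by omega)
      obtain ⟨c, hc, hcc⟩ := hA.ex (a + 1 + j) (by omega) (by omega)
      have := (hA.mem c hc).2.2
      rw [hcc, e] at this
      exact ⟨c, hc, by omega⟩
  unfold _root_.ribbonSpin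
  rw [himg, Nat.card_Icc, h.sp_eq hn]
  have h0 := prof_nonneg κ (a + n)
  have h1 := prof_antitone κ (show a + 1 ≤ a + n by omega)
  unfold sp
  omega

lemma ribbonStep_iff {n : ℕ} (hn : 1 ≤ n) {lam mu : YoungDiagram} :
    RibbonStep n lam mu ↔ ∃ a, Rel n a mu lam := by
  constructor
  · rintro ⟨hle, hR⟩
    obtain ⟨a, ρ, hA⟩ := exists_ribAt hn hR
    refine ⟨a, fun d => ?_⟩
    have hle' := le_iff_prof.1 hle d
    have hrow : ∀ i : ℤ, prof mu d ≤ i → i < prof lam d → a < d ∧ d ≤ a + n ∧ i = ρ d := by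
      intro i h1 h2
      have := prof_nonneg mu d
      have := prof_ge mu d
      obtain ⟨c, hi, -, hc⟩ := exists_cell i d (by omega) (by omega)
      have hm : c ∈ lam.cells \ mu.cells := by
        rw [mem_skew, mem_iff_prof, mem_iff_prof, hc]
        omega
      have := hA.mem c hm
      rw [hc, hi] at this
      exact this
    split_ifs with hd
    · obtain ⟨c, hc, hcd⟩ := hA.ex d hd.1 hd.2
      rw [mem_skew, mem_iff_prof, mem_iff_prof, hcd] at hc
      by_contra hne
      have h1 := hrow (prof mu d) (by omega) (by omega)
      have h2 := hrow (prof mu d + 1) (by omega) (by omega)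
      omega
    · by_contra hne
      have h1 := hrow (prof mu d) (by omega) (by omega)
      exact hd ⟨h1.1, h1.2.1⟩
  · rintro ⟨a, h⟩
    exact ⟨h.le, h.isRibbon⟩

/-! ### Horizontal strips are built by adding ribbons from left to right -/

section Strips

variable {n : ℕ} {κ ν : YoungDiagram} {T : Finset (Finset Cell)}

lemma tiling_mem (h : IsHStripTiling n (ν.cells \ κ.cells) T) {R : Finset Cell} (hR : R ∈ T)
    {c : Cell} (hc : c ∈ R) : c ∈ ν ∧ c ∉ κ := by
  rw [← mem_skew, ← h.1.2.2]
  exact Finset.mem_biUnion.2 ⟨R, hR, hc⟩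

lemma tiling_cover (h : IsHStripTiling n (ν.cells \ κ.cells) T) {c : Cell} (h1 : c ∈ ν)
    (h2 : c ∉ κ) : ∃ R ∈ T, c ∈ R := by
  have : c ∈ ν.cells \ κ.cells := mem_skew.2 ⟨h1, h2⟩
  rw [← h.1.2.2] at this
  exact Finset.mem_biUnion.1 this

lemma tiling_eq (h : IsHStripTiling n (ν.cells \ κ.cells) T) {R R' : Finset Cell} (hR : R ∈ T)
    (hR' : R' ∈ T) {c : Cell} (hc : c ∈ R) (hc' : c ∈ R') : R = R' := by
  by_contra hne
  exact Finset.disjoint_left.1 (h.1.2.1 hR hR' hne) hc hc'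

/-- No cell outside `κ` lies weakly left of and strictly above the head of a ribbon of a strip
on `κ`. -/
lemma tiling_north (h : IsHStripTiling n (ν.cells \ κ.cells) T) {R : Finset Cell} (hR : R ∈ T)
    {a : ℤ} {ρ : ℤ → ℤ} (hA : RibAt n a ρ R) {c e : Cell} (hc : c ∈ R) (hct : ct c = a + n)
    (he : e ∉ κ) (h1 : e.1 + 1 ≤ c.1) (h2 : e.2 ≤ c.2) : False := by
  rcases h.2 R hR c (hA.topRight hc hct) with h0 | h0
  · omega
  · apply h0
    refine mem_skew.2 ⟨mem_of_le (c' := c) (Nat.sub_le _ _) le_rfl (tiling_mem h hR hc).1,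
      fun hk => he (mem_of_le (c' := (c.1 - 1, c.2)) ?_ h2 hk)⟩
    change e.1 ≤ c.1 - 1
    omega

lemma tiling_index_inj (hn : 1 ≤ n) (h : IsHStripTiling n (ν.cells \ κ.cells) T)
    {R R' : Finset Cell} (hR : R ∈ T) (hR' : R' ∈ T) {a : ℤ} {ρ ρ' : ℤ → ℤ}
    (hA : RibAt n a ρ R) (hA' : RibAt n a ρ' R') : R = R' := by
  obtain ⟨c, hc, e⟩ := hA.ex (a + n) (by omega) le_rfl
  obtain ⟨c', hc', e'⟩ := hA'.ex (a + n) (by omega) le_rfl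
  have hct : ct c = ct c' := e.trans e'.symm
  have hlt : ¬ c.1 < c'.1 := fun hlt => by
    refine tiling_north h hR' hA' hc' e' (tiling_mem h hR hc).2 hlt ?_
    simp only [ct] at hct; omega
  have hgt : ¬ c'.1 < c.1 := fun hlt => by
    refine tiling_north h hR hA hc e (tiling_mem h hR' hc').2 hlt ?_
    simp only [ct] at hct; omega
  have : c = c' := cell_ext hct (by omega)
  exact tiling_eq h hR hR' hc (this ▸ hc')

/-- The ribbon of largest index can be removed from a horizontal strip. -/
lemma tiling_remove (hn : 1 ≤ n) (hle : κ ≤ ν) (h : IsHStripTiling n (ν.cells \ κ.cells) T)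
    {R : Finset Cell} (hR : R ∈ T) {a : ℤ} {ρ : ℤ → ℤ} (hA : RibAt n a ρ R)
    (hmax : ∀ R' ∈ T, ∀ a' ρ', RibAt n a' ρ' R' → a' ≤ a) :
    ∃ ν', Rel n a ν' ν ∧ ν.cells \ ν'.cells = R ∧ κ ≤ ν' ∧
      IsHStripTiling n (ν'.cells \ κ.cells) (T.erase R) := by
  have hcov : ∀ c : Cell, c ∈ ν → c ∉ κ → ct c ≤ a + n ∧ (ct c = a + n → c ∈ R) := by
    intro c h1 h2
    obtain ⟨R', hR', hc'⟩ := tiling_cover h h1 h2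
    obtain ⟨a', ρ', hA'⟩ := exists_ribAt hn (h.1.1 R' hR')
    have h3 := hmax R' hR' a' ρ' hA'
    have h4 := hA'.mem c hc'
    refine ⟨by omega, fun h5 => ?_⟩
    obtain rfl : a' = a := by omega
    rwa [tiling_index_inj hn h hR hR' hA hA']
  have hrow : ∀ c ∈ R, ∀ c' ∈ R, ct c = ct c' → c = c' := fun c hc c' hc' hcc =>
    cell_ext hcc (by rw [(hA.mem c hc).2.2, (hA.mem c' hc').2.2, hcc])
  -- a cell of the strip directly below a border cell of `R` belongs to `R`
  have hbelow : ∀ d r c, a ≤ d → d < a + n → r ∈ R → ct r = d + 1 →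
      (r.1 : ℤ) = prof ν (d + 1) - 1 → c ∈ ν → ct c = d → (c.1 : ℤ) = r.1 + 1 → c ∈ R := by
    intro d r c hd1 hd2 hr hrd hr1 hc hcd hcr
    have hrκ := (tiling_mem h hR hr).2
    have hcκ : c ∉ κ := fun hk => hrκ (mem_of_le (by omega) (by simp only [ct] at *; omega) hk)
    obtain ⟨R', hR', hc'⟩ := tiling_cover h hc hcκ
    obtain ⟨a', ρ', hA'⟩ := exists_ribAt hn (h.1.1 R' hR')
    have h3 := hmax R' hR' a' ρ' hA'
    have h4 := hA'.mem c hc'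
    rcases lt_or_eq_of_le (show d ≤ a' + n by omega) with hlt | heq
    · obtain ⟨r', hr', hrd'⟩ := hA'.ex (d + 1) (by omega) (by omega)
      have h5 := hA'.mem r' hr'
      have h6 := hA'.step d (by omega) hlt
      have h7 := (mem_iff_prof ν r').1 (tiling_mem h hR' hr').1
      rw [hrd'] at h5 h7
      rw [hcd] at h4
      have : r = r' := cell_ext (by omega) (by omega)
      rwa [tiling_eq h hR hR' hr (this ▸ hr')]
    · refine (tiling_north h hR' hA' hc' (by omega) hrκ (by omega) ?_).elim
      simp only [ct] at *; omega
  obtain ⟨hd, hhd, hhct⟩ := hA.ex (a + n) (by omega) le_rfl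
  have hborder : ∀ k : ℕ, k < n → ∀ c ∈ R, ct c = a + n - k → (c.1 : ℤ) = prof ν (ct c) - 1 := by
    intro k
    induction k with
    | zero =>
      intro _ c hc hck
      obtain ⟨h1, h2⟩ := tiling_mem h hR hc
      rw [mem_iff_prof] at h1
      obtain ⟨e, he1, he2, he3⟩ := exists_cell (prof ν (ct c) - 1) (ct c) (by omega)
        (by simp only [ct] at *; omega)
      have heν : e ∈ ν := by rw [mem_iff_prof, he3]; omega
      have heκ : e ∉ κ := fun hk =>
        h2 (mem_of_le (by omega) (by simp only [ct] at *; omega) hk)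
      have heR := (hcov e heν heκ).2 (by simp at hck; omega)
      rw [hrow c hc e heR he3.symm, he1, ← he3]
    | succ k ih =>
      intro hk s hs hsk
      push_cast at hsk
      obtain ⟨r, hr, hrd⟩ := hA.ex (a + n - k) (by omega) (by omega)
      have hr1 := ih (by omega) r hr hrd
      have hd : ct r = ct s + 1 := by omega
      have h1 := prof_step ν (ct s)
      have h2 := hA.step (ct s) (by omega) (by omega)
      have h3 := hA.mem r hr
      have h4 := hA.mem s hs
      obtain ⟨hsν, hsκ⟩ := tiling_mem h hR hs
      rw [mem_iff_prof] at hsν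
      rw [hd] at hr1 h3
      by_cases heq : prof ν (ct s) = prof ν (ct s + 1)
      · omega
      · obtain ⟨c, hc1, hc2, hc3⟩ := exists_cell (r.1 + 1) (ct s) (by omega)
          (by simp only [ct] at *; omega)
        have hcR := hbelow (ct s) r c (by omega) (by omega) hr hd hr1
          (by rw [mem_iff_prof, hc3]; omega) hc3 hc1
        have := hrow c hcR s hs hc3
        rw [← this, hc3]; omega
  have hborder' : ∀ c ∈ R, (c.1 : ℤ) = prof ν (ct c) - 1 := fun c hc => by
    have := hA.mem c hc
    exact hborder (a + n - ct c).toNat (by omega) c hc (by omega)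
  have hex : ∃ ν', Rel n a ν' ν := by
    rw [exists_remove_iff hn]
    constructor
    · by_contra hne
      obtain ⟨r, hr, hrd⟩ := hA.ex (a + 1) (by omega) (by omega)
      have hr1 := hborder' r hr
      have h1 := prof_step ν a
      obtain ⟨c, hc1, hc2, hc3⟩ := exists_cell (r.1 + 1) a (by omega)
          (by simp only [ct] at *; omega)
      rw [hrd] at hr1
      have hcR := hbelow a r c le_rfl (by omega) hr hrd hr1
          (by rw [mem_iff_prof, hc3]; omega) hc3 hc1
      have := hA.mem c hcR
      omega
    · by_contra hne
      have h1 := prof_step ν (a + n)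
      have h2 := hborder' hd hhd
      rw [hhct] at h2
      obtain ⟨c, hc1, hc2, hc3⟩ := exists_cell hd.1 (a + n + 1) (by omega)
          (by simp only [ct] at *; omega)
      have h3 := (hcov c (by rw [mem_iff_prof, hc3]; omega) (fun hk =>
        (tiling_mem h hR hhd).2
          (mem_of_le (by omega) (by simp only [ct] at *; omega) hk))).1
      omega
  obtain ⟨ν', hrel⟩ := hex
  have hRe : ν.cells \ ν'.cells = R := by
    ext c
    rw [hrel.mem_iff]
    constructor
    · rintro ⟨h1, h2, h3⟩
      obtain ⟨c', hc', hcc⟩ := hA.ex (ct c) h1 h2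
      have h4 := hborder' c' hc'
      have h5 := hrel (ct c)
      rw [if_pos ⟨h1, h2⟩] at h5
      rw [hcc] at h4
      rwa [show c = c' from cell_ext hcc.symm (by omega)]
    · intro hc
      have h1 := hA.mem c hc
      have h4 := hborder' c hc
      have h5 := hrel (ct c)
      rw [if_pos ⟨h1.1, h1.2.1⟩] at h5
      exact ⟨h1.1, h1.2.1, by omega⟩
  have hmemR : ∀ c, c ∈ R ↔ c ∈ ν ∧ c ∉ ν' := fun c => by rw [← hRe, mem_skew]
  have hle' : κ ≤ ν' := fun c hc => by
    by_contra hc'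
    exact (tiling_mem h hR ((hmemR c).2 ⟨hle hc, hc'⟩)).2 hc
  refine ⟨ν', hrel, hRe, hle', ⟨fun R' hR' => h.1.1 R' (Finset.mem_of_mem_erase hR'),
    h.1.2.1.mono (by simp), ?_⟩, ?_⟩
  · ext c
    rw [mem_skew, Finset.mem_biUnion]
    constructor
    · rintro ⟨R', hR', hc⟩
      rw [Finset.mem_erase] at hR'
      obtain ⟨h1, h2⟩ := tiling_mem h hR'.2 hc
      refine ⟨?_, h2⟩
      by_contra h3
      exact hR'.1 (tiling_eq h hR'.2 hR hc ((hmemR c).2 ⟨h1, h3⟩))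
    · rintro ⟨h1, h2⟩
      obtain ⟨R', hR', hc⟩ := tiling_cover h (hrel.le h1) h2
      refine ⟨R', Finset.mem_erase.2 ⟨?_, hR'⟩, hc⟩
      rintro rfl
      exact ((hmemR c).1 hc).2 h1
  · intro R' hR' c hc
    refine (h.2 R' (Finset.mem_of_mem_erase hR') c hc).imp_right fun h1 h2 => h1 ?_
    rw [mem_skew] at h2 ⊢
    exact ⟨hrel.le h2.1, h2.2⟩

/-- A ribbon whose index exceeds all indices of a horizontal strip can be added to it. -/
lemma tiling_insert (hn : 1 ≤ n) {ν' : YoungDiagram} (hle : κ ≤ ν')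
    (h : IsHStripTiling n (ν'.cells \ κ.cells) T) {a : ℤ}
    (hmax : ∀ R' ∈ T, ∃ a' ρ', RibAt n a' ρ' R' ∧ a' < a) (hrel : Rel n a ν' ν) :
    ν.cells \ ν'.cells ∉ T ∧
      IsHStripTiling n (ν.cells \ κ.cells) (insert (ν.cells \ ν'.cells) T) := by
  have hA := hrel.ribAt
  have hdis : ∀ R' ∈ T, Disjoint (ν.cells \ ν'.cells) R' := fun R' hR' =>
    Finset.disjoint_left.2 fun c hc hc' => (mem_skew.1 hc).2 (tiling_mem h hR' hc').1
  refine ⟨?_, ⟨?_, ?_, ?_⟩, ?_⟩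
  · intro hmem
    obtain ⟨a', ρ', hA', hlt⟩ := hmax _ hmem
    have := hA.index_unique hn hA'
    omega
  · intro R' hR'
    rcases Finset.mem_insert.1 hR' with rfl | hR'
    · exact hrel.isRibbon
    · exact h.1.1 R' hR'
  · rw [Finset.coe_insert]
    refine h.1.2.1.insert fun R' hR' _ => ⟨hdis R' hR', (hdis R' hR').symm⟩
  · ext c
    rw [Finset.biUnion_insert, h.1.2.2, Finset.mem_union, id, mem_skew, mem_skew, mem_skew]
    constructor
    · rintro (⟨h1, h2⟩ | ⟨h1, h2⟩)
      · exact ⟨h1, fun hk => h2 (hle hk)⟩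
      · exact ⟨hrel.le h1, h2⟩
    · rintro ⟨h1, h2⟩
      by_cases h3 : c ∈ ν'
      · exact Or.inr ⟨h3, h2⟩
      · exact Or.inl ⟨h1, h3⟩
  · intro R' hR' c hc
    by_cases hc0 : c.1 = 0
    · exact Or.inl hc0
    refine Or.inr fun hmem => ?_
    rw [mem_skew] at hmem
    rcases Finset.mem_insert.1 hR' with rfl | hR'
    · obtain ⟨c', hc', e'⟩ := hA.ex (a + n) (by omega) le_rfl
      obtain rfl := TopRightCell.eq hc (hA.topRight hc' e')
      have hct : ct (c.1 - 1, c.2) = a + n + 1 := by simp only [ct] at *; omega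
      by_cases h3 : ((c.1 - 1, c.2) : Cell) ∈ ν'
      · obtain ⟨R', hR', h4⟩ := tiling_cover h h3 hmem.2
        obtain ⟨a', ρ', hA', hlt⟩ := hmax _ hR'
        have := hA'.mem _ h4
        omega
      · have := hA.mem _ (mem_skew.2 ⟨hmem.1, h3⟩)
        omega
    · rcases h.2 R' hR' c hc with h0 | h0
      · exact hc0 h0
      · refine h0 (mem_skew.2 ⟨?_, hmem.2⟩)
        exact mem_of_le (c' := c) (Nat.sub_le _ _) le_rfl (tiling_mem h hR' hc.1).1

end Strips

/-! ### Generating functions of horizontal strips -/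

section Weights

variable {R : Type*} [CommRing R]

lemma finite_card_le (m : ℕ) : {μ : YoungDiagram | μ.card ≤ m}.Finite := by
  have hinj : Function.Injective (fun μ : YoungDiagram => μ.cells) := fun μ ν h =>
    YoungDiagram.ext h
  refine Set.Finite.of_finite_image (f := fun μ : YoungDiagram => μ.cells) ?_ hinj.injOn
  refine (Finset.finite_toSet ((Finset.range m ×ˢ Finset.range m).powerset)).subset ?_
  rintro _ ⟨μ, hμ, rfl⟩
  rw [Finset.mem_coe, Finset.mem_powerset]
  rintro ⟨i, j⟩ hc
  have h1 := ct_lt_card (mem_of_le (c := (i, 0)) (c' := (i, j)) le_rfl (Nat.zero_le _)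
    ((YoungDiagram.mem_cells _).1 hc))
  have h2 := ct_lt_card (mem_of_le (c := (0, j)) (c' := (i, j)) (Nat.zero_le _) le_rfl
    ((YoungDiagram.mem_cells _).1 hc))
  simp only [ct, Set.mem_ofPred_eq] at h1 h2 hμ
  rw [Finset.mem_product, Finset.mem_range, Finset.mem_range]
  constructor <;> simp only <;> omega

/-- The finite set of Young diagrams with at most `m` cells. -/
noncomputable def ydLE (m : ℕ) : Finset YoungDiagram := (finite_card_le m).toFinset

lemma mem_ydLE {m : ℕ} {μ : YoungDiagram} : μ ∈ ydLE m ↔ μ.card ≤ m := by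
  simp [ydLE]

lemma card_mono {μ ν : YoungDiagram} (h : μ ≤ ν) : μ.card ≤ ν.card :=
  Finset.card_le_card (YoungDiagram.cells_subset_iff.2 h)

/-- The tilings exhibiting `ν / κ` as a horizontal `n`-ribbon strip. -/
noncomputable def strips (n : ℕ) (κ ν : YoungDiagram) : Finset (Finset (Finset Cell)) :=
  (ν.cells \ κ.cells).powerset.powerset.filter fun T =>
    κ ≤ ν ∧ IsHStripTiling n (ν.cells \ κ.cells) T

lemma mem_strips {n : ℕ} {κ ν : YoungDiagram} {T : Finset (Finset Cell)} :
    T ∈ strips n κ ν ↔ κ ≤ ν ∧ IsHStripTiling n (ν.cells \ κ.cells) T := by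
  simp only [strips, Finset.mem_filter, Finset.mem_powerset, and_iff_right_iff_imp]
  rintro ⟨-, h⟩ R hR
  rw [Finset.mem_powerset]
  intro c hc
  exact mem_skew.2 (tiling_mem h hR hc)

/-- The tilings all of whose ribbons have index in `b, …, b + ℓ - 1`. -/
noncomputable def bstrips (n : ℕ) (b : ℤ) (ℓ : ℕ) (κ ν : YoungDiagram) :
    Finset (Finset (Finset Cell)) :=
  (strips n κ ν).filter fun T => ∀ R ∈ T, ∃ a ρ, RibAt n a ρ R ∧ b ≤ a ∧ a < b + ℓ

lemma mem_bstrips {n : ℕ} {b : ℤ} {ℓ : ℕ} {κ ν : YoungDiagram} {T : Finset (Finset Cell)} :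
    T ∈ bstrips n b ℓ κ ν ↔ (κ ≤ ν ∧ IsHStripTiling n (ν.cells \ κ.cells) T) ∧
      ∀ R ∈ T, ∃ a ρ, RibAt n a ρ R ∧ b ≤ a ∧ a < b + ℓ := by
  rw [bstrips, Finset.mem_filter, mem_strips]

lemma strips_card {n : ℕ} {κ ν : YoungDiagram} {T : Finset (Finset Cell)}
    (h : T ∈ strips n κ ν) : ν.card = κ.card + n * T.card := by
  obtain ⟨hle, hT⟩ := mem_strips.1 h
  have h2 : κ.cells ⊆ ν.cells := YoungDiagram.cells_subset_iff.2 hle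
  have h1 : (ν.cells \ κ.cells).card = T.card * n := by
    rw [← hT.1.2.2, Finset.card_biUnion (t := id) (fun A hA B hB hne => hT.1.2.1 hA hB hne)]
    rw [Finset.sum_congr rfl fun R hR => show (id R).card = n from (hT.1.1 R hR).1]
    simp
  rw [Finset.card_sdiff_of_subset h2] at h1
  have h3 := Finset.card_le_card h2
  change ν.cells.card = κ.cells.card + _
  rw [mul_comm]
  omega

/-- The generating function of the strips `ν / κ`, a strip with `k` ribbons being weighted by
`w k` and by its spin. -/
noncomputable def SW (n : ℕ) (q : R) (w : ℕ → R) (κ ν : YoungDiagram) : R :=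
  ∑ T ∈ strips n κ ν, q ^ tilingSpin T * w T.card

/-- The generating function of the strips `ν / κ` with indices in `b, …, b + ℓ - 1`. -/
noncomputable def WB (n : ℕ) (q x : R) (b : ℤ) (ℓ : ℕ) (κ ν : YoungDiagram) : R :=
  ∑ T ∈ bstrips n b ℓ κ ν, q ^ tilingSpin T * x ^ T.card

lemma empty_tiling {n : ℕ} {κ ν : YoungDiagram} (hle : κ ≤ ν) :
    IsHStripTiling n (ν.cells \ κ.cells) ∅ ↔ κ = ν := by
  constructor
  · intro h
    refine le_antisymm hle fun c hc => ?_
    by_contra hk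
    obtain ⟨R, hR, -⟩ := tiling_cover h hc hk
    simp at hR
  · rintro rfl
    refine ⟨⟨by simp, by simp, by simp⟩, by intro R hR; simp at hR⟩

lemma WB_zero (n : ℕ) (q x : R) (b : ℤ) (κ ν : YoungDiagram) :
    WB n q x b 0 κ ν = if κ = ν then 1 else 0 := by
  have h : ∀ T, T ∈ bstrips n b 0 κ ν ↔ T = ∅ ∧ κ = ν := by
    intro T
    rw [mem_bstrips]
    constructor
    · rintro ⟨⟨h1, h2⟩, h3⟩
      have : T = ∅ := by
        rw [Finset.eq_empty_iff_forall_notMem]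
        intro R hR
        obtain ⟨a, ρ, -, h4, h5⟩ := h3 R hR
        simp at h5; omega
      subst this
      exact ⟨rfl, (empty_tiling h1).1 h2⟩
    · rintro ⟨rfl, rfl⟩
      exact ⟨⟨le_rfl, (empty_tiling le_rfl).2 rfl⟩, by simp⟩
  unfold WB
  split_ifs with hk
  · have : bstrips n b 0 κ ν = {∅} := by
      ext T; rw [h, Finset.mem_singleton]; exact and_iff_left hk
    rw [this]; simp [tilingSpin]
  · have : bstrips n b 0 κ ν = ∅ := by
      rw [Finset.eq_empty_iff_forall_notMem]; intro T; rw [h]; exact fun h => hk h.2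
    rw [this]; simp

lemma WB_succ {n : ℕ} (hn : 1 ≤ n) (q x : R) (b : ℤ) (ℓ : ℕ) (κ ν : YoungDiagram) :
    WB n q x b (ℓ + 1) κ ν =
      WB n q x b ℓ κ ν + x * up n q (b + ℓ) (fun ν' => WB n q x b ℓ κ ν') ν := by
  unfold WB
  rw [← Finset.sum_filter_add_sum_filter_not (bstrips n b (ℓ + 1) κ ν)
    (fun T => ∀ R ∈ T, ∃ a ρ, RibAt n a ρ R ∧ b ≤ a ∧ a < b + ℓ)]
  congr 1
  · congr 1
    ext T
    rw [Finset.mem_filter, mem_bstrips, mem_bstrips]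
    constructor
    · rintro ⟨⟨h1, -⟩, h2⟩; exact ⟨h1, h2⟩
    · rintro ⟨h1, h2⟩
      refine ⟨⟨h1, fun R hR => ?_⟩, h2⟩
      obtain ⟨a, ρ, h3, h4, h5⟩ := h2 R hR
      exact ⟨a, ρ, h3, h4, by push_cast; omega⟩
  -- the tilings containing the ribbon of index `b + ℓ`
  have key : ∀ T ∈ (bstrips n b (ℓ + 1) κ ν).filter
      (fun T => ¬ ∀ R ∈ T, ∃ a ρ, RibAt n a ρ R ∧ b ≤ a ∧ a < b + ℓ),
      ∃ ν', Rel n (b + ℓ) ν' ν ∧ ν.cells \ ν'.cells ∈ T ∧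
        T.erase (ν.cells \ ν'.cells) ∈ bstrips n b ℓ κ ν' := by
    intro T hT
    rw [Finset.mem_filter, mem_bstrips] at hT
    obtain ⟨⟨⟨hle, hT⟩, hb⟩, hex⟩ := hT
    push Not at hex
    obtain ⟨R, hR, hR'⟩ := hex
    obtain ⟨a, ρ, hA, h1, h2⟩ := hb R hR
    have h3 := hR' a ρ hA h1
    push_cast at h2
    obtain rfl : a = b + ℓ := by omega
    have hmax : ∀ R' ∈ T, ∀ a' ρ', RibAt n a' ρ' R' → a' ≤ b + ℓ := by
      intro R' hR' a' ρ' hA'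
      obtain ⟨a'', ρ'', hA'', -, h4⟩ := hb R' hR'
      rw [hA'.index_unique hn hA'']
      push_cast at h4; omega
    obtain ⟨ν', hrel, rfl, hle', hT'⟩ := tiling_remove hn hle hT hR hA hmax
    refine ⟨ν', hrel, hR, mem_bstrips.2 ⟨⟨hle', hT'⟩, fun R' hR' => ?_⟩⟩
    rw [Finset.mem_erase] at hR'
    obtain ⟨a, ρ', hA', h1, h2⟩ := hb R' hR'.2
    refine ⟨a, ρ', hA', h1, lt_of_le_of_ne (by push_cast at h2; omega) ?_⟩
    rintro rfl
    exact hR'.1 (tiling_index_inj hn hT hR'.2 hR hA' hA)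
  by_cases hrem : ∃ ν', Rel n (b + ℓ) ν' ν
  · obtain ⟨ν', hrel⟩ := hrem
    rw [up_of_rel hrel, Finset.mul_sum, Finset.mul_sum]
    have hins : ∀ T ∈ bstrips n b ℓ κ ν', ν.cells \ ν'.cells ∉ T ∧
        IsHStripTiling n (ν.cells \ κ.cells) (insert (ν.cells \ ν'.cells) T) := by
      intro T hT
      obtain ⟨⟨hle, hT⟩, hb⟩ := mem_bstrips.1 hT
      refine tiling_insert hn hle hT (fun R' hR' => ?_) hrel
      obtain ⟨a, ρ, h1, -, h2⟩ := hb R' hR'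
      exact ⟨a, ρ, h1, h2⟩
    refine Finset.sum_nbij' (fun T => T.erase (ν.cells \ ν'.cells))
      (fun T => insert (ν.cells \ ν'.cells) T) ?_ ?_ ?_ ?_ ?_
    · intro T hT
      obtain ⟨ν'', hrel', h1, h2⟩ := key T hT
      obtain rfl := hrel.unique_left hrel'
      exact h2
    · intro T hT
      obtain ⟨⟨hle, hT'⟩, hb⟩ := mem_bstrips.1 hT
      rw [Finset.mem_filter, mem_bstrips]
      refine ⟨⟨⟨hle.trans hrel.le, (hins T hT).2⟩, fun R' hR' => ?_⟩, fun hall => ?_⟩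
      · rcases Finset.mem_insert.1 hR' with rfl | hR'
        · exact ⟨b + ℓ, _, hrel.ribAt, by omega, by push_cast; omega⟩
        · obtain ⟨a, ρ, h1, h2, h3⟩ := hb R' hR'
          exact ⟨a, ρ, h1, h2, by push_cast; omega⟩
      · obtain ⟨a, ρ, h1, h2, h3⟩ := hall _ (Finset.mem_insert_self _ _)
        have := hrel.ribAt.index_unique hn h1
        omega
    · intro T hT
      obtain ⟨ν'', hrel', h1, h2⟩ := key T hT
      obtain rfl := hrel.unique_left hrel'
      exact Finset.insert_erase h1
    · intro T hT
      exact Finset.erase_insert (hins T hT).1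
    · intro T hT
      obtain ⟨ν'', hrel', h1, h2⟩ := key T hT
      obtain rfl := hrel.unique_left hrel'
      have e1 : tilingSpin T = sp n (b + ℓ) ν + tilingSpin (T.erase (ν.cells \ ν'.cells)) := by
        unfold tilingSpin
        rw [← hrel.ribbonSpin hn, Finset.add_sum_erase _ _ h1]
      have e2 := Finset.card_erase_add_one h1
      rw [e1, ← e2]
      ring
  · rw [up_of_not hrem, mul_zero]
    refine Finset.sum_eq_zero fun T hT => ?_
    obtain ⟨ν', hrel, -⟩ := key T hT
    exact (hrem ⟨ν', hrel⟩).elim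

lemma Uprod_eq {n : ℕ} (hn : 1 ≤ n) (q x : R) (b : ℤ) (ℓ m : ℕ) (f : YoungDiagram → R)
    {ν : YoungDiagram} (hν : ν.card ≤ m) :
    Uprod n q x b ℓ f ν = ∑ κ ∈ ydLE m, f κ * WB n q x b ℓ κ ν := by
  induction ℓ generalizing ν with
  | zero =>
    simp only [Uprod, WB_zero, mul_ite, mul_one, mul_zero]
    rw [Finset.sum_ite_eq' (ydLE m) ν, if_pos (mem_ydLE.2 hν)]
  | succ ℓ ih =>
    simp only [Uprod, Uop, WB_succ hn, mul_add, Finset.sum_add_distrib]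
    rw [ih hν]
    congr 1
    by_cases hrem : ∃ ν', Rel n (b + ℓ) ν' ν
    · obtain ⟨ν', hrel⟩ := hrem
      have := hrel.card_eq
      simp only [up_of_rel hrel]
      rw [ih (by omega), Finset.mul_sum, Finset.mul_sum]
      exact Finset.sum_congr rfl fun κ _ => by ring
    · simp [up_of_not hrem]

lemma up_dn_adjoint {n : ℕ} (hn : 1 ≤ n) (q : R) (a : ℤ) (m : ℕ) (f g : YoungDiagram → R) :
    ∑ κ ∈ ydLE m, g κ * dn n q a f κ = ∑ ν ∈ ydLE (m + n), up n q a g ν * f ν := by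
  have h1 : ∀ κ ∈ ydLE m, g κ * dn n q a f κ =
      ∑ ν ∈ ydLE (m + n), if Rel n a κ ν then q ^ sp n a ν * g κ * f ν else 0 := by
    intro κ hκ
    rw [mem_ydLE] at hκ
    by_cases h : ∃ ν, Rel n a κ ν
    · obtain ⟨ν, hrel⟩ := h
      rw [dn_of_rel hrel, Finset.sum_eq_single ν, if_pos hrel, hrel.sp_eq hn]
      · ring
      · intro ν' _ hne
        exact if_neg fun h => hne (h.unique_right hrel)
      · intro hν
        rw [mem_ydLE, hrel.card_eq] at hν; omega
    · rw [dn_of_not h, mul_zero, Finset.sum_eq_zero]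
      intro ν _
      exact if_neg fun h' => h ⟨ν, h'⟩
  have h2 : ∀ ν ∈ ydLE (m + n), up n q a g ν * f ν =
      ∑ κ ∈ ydLE m, if Rel n a κ ν then q ^ sp n a ν * g κ * f ν else 0 := by
    intro ν hν
    rw [mem_ydLE] at hν
    by_cases h : ∃ κ, Rel n a κ ν
    · obtain ⟨κ, hrel⟩ := h
      rw [up_of_rel hrel, Finset.sum_eq_single κ, if_pos hrel]
      · intro ν' _ hne
        exact if_neg fun h => hne (h.unique_left hrel)
      · intro hκ
        rw [mem_ydLE] at hκ
        have := hrel.card_eq; omega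
    · rw [up_of_not h, zero_mul, Finset.sum_eq_zero]
      intro κ _
      exact if_neg fun h' => h ⟨κ, h'⟩
  rw [Finset.sum_congr rfl h1, Finset.sum_congr rfl h2, Finset.sum_comm]

lemma Dprod_eq {n : ℕ} (hn : 1 ≤ n) (q y : R) (b : ℤ) (ℓ m : ℕ) (f : YoungDiagram → R)
    {μ : YoungDiagram} (hm : μ.card + n * ℓ ≤ m) :
    Dprod n q y b ℓ f μ = ∑ ν ∈ ydLE m, WB n q y b ℓ μ ν * f ν := by
  induction ℓ generalizing f m with
  | zero =>
    simp only [Dprod, WB_zero, ite_mul, one_mul, zero_mul]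
    rw [Finset.sum_ite_eq (ydLE m) μ, if_pos (mem_ydLE.2 (by omega))]
  | succ ℓ ih =>
    rw [mul_add, mul_one] at hm
    obtain ⟨m', rfl⟩ : ∃ m', m = m' + n := ⟨m - n, by omega⟩
    simp only [Dprod, WB_succ hn, add_mul, Finset.sum_add_distrib]
    rw [ih m' _ (by omega), ← ih (m' + n) f (by omega), ih m' f (by omega)]
    simp only [Dop, mul_add, Finset.sum_add_distrib]
    congr 1
    have := up_dn_adjoint hn q (b + ℓ) m' f (fun ν' => WB n q y b ℓ μ ν')
    simp only [mul_assoc]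
    rw [← Finset.mul_sum, ← this, Finset.mul_sum]
    exact Finset.sum_congr rfl fun κ _ => by ring

end Weights

/-! ### The commutation relation and the Pieri rule -/

section Pieri

variable {R : Type*} [CommRing R]

lemma WB_eq_SW {n : ℕ} (hn : 1 ≤ n) (q x : R) {b : ℤ} {ℓ : ℕ} {κ ν : YoungDiagram}
    (h1 : b ≤ -(ν.card : ℤ)) (h2 : (ν.card : ℤ) ≤ b + ℓ) :
    WB n q x b ℓ κ ν = SW n q (fun j => x ^ j) κ ν := by
  unfold WB SW
  congr 1
  refine Finset.filter_true_of_mem fun T hT R hR => ?_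
  obtain ⟨hle, hT⟩ := mem_strips.1 hT
  obtain ⟨a, ρ, hA⟩ := exists_ribAt hn (hT.1.1 R hR)
  obtain ⟨c, hc, e⟩ := hA.ex (a + 1) (by omega) (by omega)
  have := ct_lt_card (tiling_mem hT hR hc).1
  exact ⟨a, ρ, hA, by omega, by omega⟩

lemma bstrips_subset (n : ℕ) (b : ℤ) (ℓ : ℕ) (κ ν : YoungDiagram) :
    bstrips n b ℓ κ ν ⊆ strips n κ ν := Finset.filter_subset _ _

lemma WB_eq_zero {n : ℕ} (q : R) {y : R} {k : ℕ} (hy : y ^ (k + 1) = 0) (b : ℤ) (ℓ : ℕ)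
    {κ ν : YoungDiagram} (h : ¬ ν.card ≤ κ.card + n * k) : WB n q y b ℓ κ ν = 0 := by
  refine Finset.sum_eq_zero fun T hT => ?_
  have h1 := strips_card (bstrips_subset _ _ _ _ _ hT)
  have h2 : k + 1 ≤ T.card := by
    by_contra hlt
    have : n * T.card ≤ n * k := Nat.mul_le_mul_left _ (by omega)
    omega
  rw [pow_eq_zero_of_le h2 hy, mul_zero]

lemma SW_eq_zero_of_not_le {n : ℕ} (q : R) (w : ℕ → R) {κ ν : YoungDiagram} (h : ¬ κ ≤ ν) :
    SW n q w κ ν = 0 :=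
  Finset.sum_eq_zero fun _ hT => (h (mem_strips.1 hT).1).elim

lemma ydLE_mono {m m' : ℕ} (h : m ≤ m') : ydLE m ⊆ ydLE m' := fun _ hμ =>
  mem_ydLE.2 ((mem_ydLE.1 hμ).trans h)

/-- Adding horizontal strips, a strip with `k` ribbons being weighted by `x ^ k`. -/
noncomputable def Uf (n : ℕ) (q x : R) (g : YoungDiagram → R) (ν : YoungDiagram) : R :=
  ∑ κ ∈ ydLE ν.card, g κ * SW n q (fun j => x ^ j) κ ν

/-- The transpose of `Uf`, truncated to strips with at most `k` ribbons. -/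
noncomputable def Df (n : ℕ) (q y : R) (k : ℕ) (g : YoungDiagram → R) (μ : YoungDiagram) : R :=
  ∑ ν ∈ ydLE (μ.card + n * k), SW n q (fun j => y ^ j) μ ν * g ν

lemma Dprod_eq_Df {n : ℕ} (hn : 1 ≤ n) (q : R) {y : R} {k : ℕ} (hy : y ^ (k + 1) = 0) {b : ℤ}
    {ℓ : ℕ} {μ : YoungDiagram} (h1 : b ≤ -((μ.card + n * k : ℕ) : ℤ))
    (h2 : ((μ.card + n * k : ℕ) : ℤ) ≤ b + ℓ) (g : YoungDiagram → R) :
    Dprod n q y b ℓ g μ = Df n q y k g μ := by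
  rw [Dprod_eq hn q y b ℓ (μ.card + n * k + n * ℓ) g (by omega), Df]
  rw [← Finset.sum_subset (ydLE_mono (Nat.le_add_right (μ.card + n * k) (n * ℓ)))]
  · refine Finset.sum_congr rfl fun ν hν => ?_
    rw [mem_ydLE] at hν
    rw [WB_eq_SW hn q y (by omega) (by omega)]
  · intro ν _ hν
    rw [mem_ydLE] at hν
    rw [WB_eq_zero q hy b ℓ hν, zero_mul]

lemma Uprod_eq_Uf {n : ℕ} (hn : 1 ≤ n) (q x : R) {b : ℤ} {ℓ : ℕ} {ν : YoungDiagram}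
    (h1 : b ≤ -(ν.card : ℤ)) (h2 : (ν.card : ℤ) ≤ b + ℓ) (g : YoungDiagram → R) :
    Uprod n q x b ℓ g ν = Uf n q x g ν := by
  rw [Uprod_eq hn q x b ℓ ν.card g le_rfl, Uf]
  exact Finset.sum_congr rfl fun κ _ => by rw [WB_eq_SW hn q x h1 h2]

/-- Commutation of the strip-adding and strip-removing operators, over a ring in which `y` is
nilpotent. -/
lemma Df_Uf {n : ℕ} (hn : 1 ≤ n) (q x : R) {y : R} {k : ℕ} (hy : y ^ (k + 1) = 0)
    (g : YoungDiagram → R) (μ : YoungDiagram) :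
    eS n q (x * y) 0 * Df n q y k (Uf n q x g) μ = Uf n q x (Df n q y k g) μ := by
  set M := μ.card + n * k with hM
  have key := congrFun (Dprod_Uprod hn q x y (-((M + n : ℕ) : ℤ)) (2 * (M + n)) g) μ
  have hb : -((M + n : ℕ) : ℤ) + (2 * (M + n) : ℕ) = M + n := by push_cast; ring
  rw [Dprod_eq_Df hn q hy (by omega) (by omega), Uprod_eq_Uf hn q x (by omega) (by omega),
    hb] at key
  have hL : Df n q y k (Em n q (x * y) (M + n) (Uprod n q x (-((M + n : ℕ) : ℤ))
      (2 * (M + n)) g)) μ = eS n q (x * y) 0 * Df n q y k (Uf n q x g) μ := by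
    rw [Df, Df, Finset.mul_sum]
    refine Finset.sum_congr rfl fun ν hν => ?_
    rw [mem_ydLE] at hν
    have hwin : win n (M + n) ν = 0 := by
      rw [win, prof_far_right (by omega), prof_far_right (by omega)]; rfl
    rw [Em, hwin, Uprod_eq_Uf hn q x (by omega) (by omega)]
    ring
  have hR : Uf n q x (Em n q (x * y) (-((M + n : ℕ) : ℤ)) (Dprod n q y (-((M + n : ℕ) : ℤ))
      (2 * (M + n)) g)) μ = Uf n q x (Df n q y k g) μ := by
    rw [Uf, Uf]
    refine Finset.sum_congr rfl fun κ hκ => ?_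
    rw [mem_ydLE] at hκ
    have hwin : win n (-((M + n : ℕ) : ℤ)) κ = n := by
      rw [win, prof_far_left (by omega), prof_far_left (by omega)]; omega
    rw [Em, hwin, Dprod_eq_Df hn q hy (by omega) (by omega)]
    simp [eS]
  rw [← hL, ← hR, key]

/-- The generating function of ribbon tableaux of shape `ν / δ` with `N` letters, in which `k`
ribbons with the letter `i` contribute the factor `w i k`. -/
noncomputable def RF (n : ℕ) (q : R) (δ : YoungDiagram) (w : ℕ → ℕ → R) : ℕ → YoungDiagram → R
  | 0, ν => if ν = δ then 1 else 0
  | N + 1, ν => ∑ κ ∈ ydLE ν.card, RF n q δ w N κ * SW n q (w N) κ ν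

lemma map_SW {S : Type*} [CommRing S] (φ : R →+* S) (n : ℕ) (q : R) (w : ℕ → R)
    (κ ν : YoungDiagram) : φ (SW n q w κ ν) = SW n (φ q) (fun j => φ (w j)) κ ν := by
  simp [SW, map_sum]

lemma map_RF {S : Type*} [CommRing S] (φ : R →+* S) (n : ℕ) (q : R) (δ : YoungDiagram)
    (w : ℕ → ℕ → R) (N : ℕ) (ν : YoungDiagram) :
    φ (RF n q δ w N ν) = RF n (φ q) δ (fun i j => φ (w i j)) N ν := by
  induction N generalizing ν with
  | zero => simp only [RF]; split_ifs <;> simp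
  | succ N ih => simp only [RF, map_sum, map_mul, ih, map_SW]

lemma strips_of_core {n : ℕ} (hn : 1 ≤ n) {δ μ : YoungDiagram}
    (hδ : ∀ κ, ¬ RibbonStep n δ κ) {T : Finset (Finset Cell)} (hT : T ∈ strips n μ δ) :
    T = ∅ ∧ μ = δ := by
  obtain ⟨hle, hT⟩ := mem_strips.1 hT
  have hemp : T = ∅ := by
    by_contra hne
    have hne' : T.Nonempty := Finset.nonempty_iff_ne_empty.2 hne
    choose! ix rh hix using fun R (hR : R ∈ T) => exists_ribAt hn (hT.1.1 R hR)
    obtain ⟨R, hR, hmax⟩ := Finset.exists_max_image T ix hne'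
    obtain ⟨κ, hrel, -⟩ := tiling_remove hn hle hT hR (hix R hR) fun R' hR' a' ρ' hA' => by
      rw [hA'.index_unique hn (hix R' hR')]; exact hmax R' hR'
    exact hδ κ ((ribbonStep_iff hn).2 ⟨_, hrel⟩)
  subst hemp
  exact ⟨rfl, (empty_tiling hle).1 hT⟩

lemma Df_const_mul (n : ℕ) (q y c : R) (k : ℕ) (g : YoungDiagram → R) (μ : YoungDiagram) :
    Df n q y k (fun ν => c * g ν) μ = c * Df n q y k g μ := by
  simp only [Df, Finset.mul_sum]
  exact Finset.sum_congr rfl fun _ _ => by ring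

lemma Uf_const_mul (n : ℕ) (q x c : R) (g : YoungDiagram → R) (μ : YoungDiagram) :
    Uf n q x (fun ν => c * g ν) μ = c * Uf n q x g μ := by
  simp only [Uf, Finset.mul_sum]
  exact Finset.sum_congr rfl fun _ _ => by ring

/-- The Pieri rule in generating function form, with all denominators cleared. -/
lemma pieri_nilpotent {n : ℕ} (hn : 1 ≤ n) (q : R) {y : R} {k : ℕ} (hy : y ^ (k + 1) = 0)
    {δ : YoungDiagram} (hδ : ∀ κ, ¬ RibbonStep n δ κ) (x : ℕ → R) (N : ℕ) (μ : YoungDiagram) :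
    (∏ i ∈ Finset.range N, eS n q (x i * y) 0) *
      Df n q y k (RF n q δ (fun i j => x i ^ j) N) μ = RF n q δ (fun i j => x i ^ j) N μ := by
  induction N generalizing μ with
  | zero =>
    simp only [Finset.range_zero, Finset.prod_empty, one_mul, Df, RF]
    by_cases h : μ = δ
    · subst h
      rw [Finset.sum_eq_single μ, if_pos rfl, mul_one, SW]
      · have : strips n μ μ = {∅} := by
          ext T
          rw [Finset.mem_singleton]
          refine ⟨fun hT => (strips_of_core hn hδ hT).1, ?_⟩
          rintro rfl
          exact mem_strips.2 ⟨le_rfl, (empty_tiling le_rfl).2 rfl⟩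
        rw [this]; simp [tilingSpin]
      · intro ν _ hne; rw [if_neg hne, mul_zero]
      · intro h; exact (h (mem_ydLE.2 (by omega))).elim
    · rw [if_neg h]
      refine Finset.sum_eq_zero fun ν _ => ?_
      split_ifs with h1
      · subst h1
        rw [mul_one]
        exact Finset.sum_eq_zero fun T hT => (h (strips_of_core hn hδ hT).2).elim
      · rw [mul_zero]
  | succ N ih =>
    have e : RF n q δ (fun i j => x i ^ j) (N + 1) =
        Uf n q (x N) (RF n q δ (fun i j => x i ^ j) N) := rfl
    rw [e, Finset.prod_range_succ, mul_assoc, Df_Uf hn q (x N) hy, ← Uf_const_mul]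
    congr 1
    funext κ
    exact ih κ

/-- The Pieri rule.  The multiplier is the coefficient of `X ^ k` in the inverse `H` of
`∏ (1 - q^{2j} x_i X)`, that is, a complete homogeneous polynomial in the `q^{2j} x_i`. -/
lemma pieri {n : ℕ} (hn : 1 ≤ n) (q : R) {δ : YoungDiagram} (hδ : ∀ κ, ¬ RibbonStep n δ κ)
    (x : ℕ → R) (N : ℕ) (H : PowerSeries R)
    (hH : H * ∏ i ∈ Finset.range N, ∏ j ∈ Finset.range n,
      (1 - PowerSeries.C (q ^ (2 * j) * x i) * PowerSeries.X) = 1)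
    (k : ℕ) (μ : YoungDiagram) {M : ℕ} (hM : μ.card + n * k ≤ M) :
    PowerSeries.coeff k H * RF n q δ (fun i j => x i ^ j) N μ =
      ∑ ν ∈ ydLE M, SW n q (fun j => if j = k then 1 else 0) μ ν *
        RF n q δ (fun i j => x i ^ j) N ν := by
  let I : Ideal (PowerSeries R) := Ideal.span {(PowerSeries.X : PowerSeries R) ^ (k + 1)}
  let π : PowerSeries R →+* PowerSeries R ⧸ I := Ideal.Quotient.mk I
  let φ : R →+* PowerSeries R ⧸ I := π.comp PowerSeries.C
  have hy : π PowerSeries.X ^ (k + 1) = 0 := by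
    rw [← map_pow]
    exact Ideal.Quotient.eq_zero_iff_mem.2 (Ideal.mem_span_singleton_self _)
  have h1 := pieri_nilpotent hn (φ q) hy hδ (fun i => φ (x i)) N μ
  have hRF : ∀ ν, RF n (φ q) δ (fun i j => φ (x i) ^ j) N ν =
      π (PowerSeries.C (RF n q δ (fun i j => x i ^ j) N ν)) := fun ν => by
    have := map_RF φ n q δ (fun i j => x i ^ j) N ν
    simp only [map_pow] at this
    exact this.symm
  have hE : (∏ i ∈ Finset.range N, eS n (φ q) (φ (x i) * π PowerSeries.X) 0) =
      π (∏ i ∈ Finset.range N, ∏ j ∈ Finset.range n,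
      (1 - PowerSeries.C (q ^ (2 * j) * x i) * PowerSeries.X)) := by
    simp only [eS, map_prod, map_sub, map_one, map_mul, map_pow, φ, RingHom.comp_apply,
      Nat.Ico_zero_eq_range, mul_assoc]
  have h2 : π (∑ ν ∈ ydLE (μ.card + n * k),
      SW n (PowerSeries.C q) (fun j => PowerSeries.X ^ j) μ ν *
        PowerSeries.C (RF n q δ (fun i j => x i ^ j) N ν)) =
      π (H * PowerSeries.C (RF n q δ (fun i j => x i ^ j) N μ)) := by
    rw [map_mul, ← hRF μ, ← h1, hE, ← mul_assoc, ← map_mul, hH, map_one, one_mul, Df, map_sum]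
    refine Finset.sum_congr rfl fun ν _ => ?_
    rw [map_mul, hRF, map_SW]
    simp only [map_pow]
    rfl
  rw [Ideal.Quotient.eq, Ideal.mem_span_singleton, PowerSeries.X_pow_dvd_iff] at h2
  have h3 := h2 k (Nat.lt_succ_self k)
  rw [map_sub, sub_eq_zero, map_sum, PowerSeries.coeff_mul_C] at h3
  rw [← h3]
  rw [← Finset.sum_subset (ydLE_mono hM)]
  · refine Finset.sum_congr rfl fun ν _ => ?_
    rw [PowerSeries.coeff_mul_C, SW, SW, map_sum]
    congr 1
    refine Finset.sum_congr rfl fun T _ => ?_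
    rw [← map_pow, PowerSeries.coeff_C_mul, PowerSeries.coeff_X_pow]
    simp only [eq_comm]
  · intro ν _ hν
    rw [mem_ydLE] at hν
    rw [SW, Finset.sum_eq_zero, zero_mul]
    intro T hT
    have := strips_card hT
    rw [if_neg, mul_zero]
    rintro rfl
    omega

/-- The weight function selecting the tableaux of weight `α`. -/
noncomputable def indW (α : ℕ → ℕ) (i j : ℕ) : R := if j = α i then 1 else 0

lemma SW_ind_ne_zero {n : ℕ} {q : R} {k : ℕ} {κ ν : YoungDiagram}
    (h : SW n q (fun j => if j = k then 1 else 0) κ ν ≠ 0) :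
    κ ≤ ν ∧ ν.card = κ.card + n * k ∧ ∃ T ∈ strips n κ ν, T.card = k := by
  obtain ⟨T, hT, hne⟩ := Finset.exists_ne_zero_of_sum_ne_zero h
  have hk : T.card = k := by
    by_contra hk
    simp [hk] at hne
  exact ⟨(mem_strips.1 hT).1, hk ▸ strips_card hT, T, hT, hk⟩

lemma RF_ind_card {n : ℕ} {q : R} {δ : YoungDiagram} {α : ℕ → ℕ} {L : ℕ} {ν : YoungDiagram}
    (h : RF n q δ (indW α) L ν ≠ 0) :
    ν.card = δ.card + n * ∑ i ∈ Finset.range L, α i := by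
  induction L generalizing ν with
  | zero =>
    simp only [RF, ne_eq, ite_eq_right_iff, Classical.not_imp] at h
    simp [h.1]
  | succ L ih =>
    obtain ⟨κ, hκ, hne⟩ := Finset.exists_ne_zero_of_sum_ne_zero h
    have h1 := ih (left_ne_zero_of_mul hne)
    have h2 := (SW_ind_ne_zero (right_ne_zero_of_mul hne)).2.1
    rw [Finset.sum_range_succ, mul_add]
    omega

lemma RF_succ_eq {n : ℕ} {q : R} {δ : YoungDiagram} {w : ℕ → ℕ → R} {N M : ℕ} {ν : YoungDiagram}
    (h : ν.card ≤ M) :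
    RF n q δ w (N + 1) ν = ∑ κ ∈ ydLE M, RF n q δ w N κ * SW n q (w N) κ ν := by
  refine Finset.sum_subset (ydLE_mono h) fun κ _ hκ => ?_
  rw [SW_eq_zero_of_not_le, mul_zero]
  exact fun hle => hκ (mem_ydLE.2 (card_mono hle))

/-- The iterated Pieri rule. -/
lemma pieri_iterate {n : ℕ} (hn : 1 ≤ n) (q : R) {δ : YoungDiagram}
    (hδ : ∀ κ, ¬ RibbonStep n δ κ) (x : ℕ → R) (N : ℕ) (H : PowerSeries R)
    (hH : H * ∏ i ∈ Finset.range N, ∏ j ∈ Finset.range n,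
      (1 - PowerSeries.C (q ^ (2 * j) * x i) * PowerSeries.X) = 1)
    (α : ℕ → ℕ) (L : ℕ) (μ : YoungDiagram) {M : ℕ}
    (hM : μ.card + n * ∑ i ∈ Finset.range L, α i ≤ M) :
    (∏ i ∈ Finset.range L, PowerSeries.coeff (α i) H) * RF n q δ (fun i j => x i ^ j) N μ =
      ∑ ν ∈ ydLE M, RF n q μ (indW α) L ν * RF n q δ (fun i j => x i ^ j) N ν := by
  induction L with
  | zero =>
    simp only [Finset.range_zero, Finset.prod_empty, one_mul, RF, ite_mul, zero_mul]
    rw [Finset.sum_ite_eq' (ydLE M) μ, if_pos (mem_ydLE.2 (by omega))]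
  | succ L ih =>
    rw [Finset.sum_range_succ, mul_add] at hM
    rw [Finset.prod_range_succ, mul_right_comm, ih (by omega), Finset.sum_mul]
    have h1 : ∀ κ ∈ ydLE M, RF n q μ (indW α) L κ * RF n q δ (fun i j => x i ^ j) N κ *
        PowerSeries.coeff (α L) H = ∑ ν ∈ ydLE M, RF n q μ (indW α) L κ *
          SW n q (indW α L) κ ν * RF n q δ (fun i j => x i ^ j) N ν := by
      intro κ _
      by_cases h0 : RF n q μ (indW α) L κ = 0
      · simp [h0]
      · have := RF_ind_card h0
        rw [mul_assoc, mul_comm _ (PowerSeries.coeff (α L) H),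
          pieri hn q hδ x N H hH (α L) κ (M := M) (by omega), Finset.mul_sum]
        exact Finset.sum_congr rfl fun ν _ => (mul_assoc _ _ _).symm
    rw [Finset.sum_congr rfl h1, Finset.sum_comm]
    refine Finset.sum_congr rfl fun ν hν => ?_
    rw [RF_succ_eq (mem_ydLE.1 hν), Finset.sum_mul]

end Pieri

/-! ### Ribbon functions as iterated strip sums -/

section Tableaux

variable {R : Type*} [CommRing R]

lemma tableau_ext {n N : ℕ} {ν δ : YoungDiagram} {T T' : RibbonTableau n N ν δ}
    (h1 : T.chain = T'.chain) (h2 : T.tiling = T'.tiling) : T = T' := by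
  cases T; cases T'; simp only at h1 h2; subst h1; subst h2; rfl

/-- Extending a tableau by one more strip. -/
noncomputable def snocTab {n N : ℕ} {κ ν δ : YoungDiagram} (T : RibbonTableau n N κ δ)
    (S : Finset (Finset Cell)) (hS : S ∈ strips n κ ν) : RibbonTableau n (N + 1) ν δ where
  chain := Fin.snoc (α := fun _ => YoungDiagram) T.chain ν
  chain_zero := by
    rw [show (0 : Fin (N + 1 + 1)) = Fin.castSucc 0 from rfl, Fin.snoc_castSucc, T.chain_zero]
  chain_last := by rw [Fin.snoc_last]
  chain_mono := by
    intro i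
    refine Fin.lastCases ?_ (fun i => ?_) i
    · rw [Fin.succ_last, Fin.snoc_last, Fin.snoc_castSucc, T.chain_last]
      exact (mem_strips.1 hS).1
    · rw [← Fin.castSucc_succ, Fin.snoc_castSucc, Fin.snoc_castSucc]
      exact T.chain_mono i
  tiling := Fin.snoc (α := fun _ => Finset (Finset Cell)) T.tiling S
  tiling_strip := by
    intro i
    refine Fin.lastCases ?_ (fun i => ?_) i
    · rw [Fin.succ_last, Fin.snoc_last, Fin.snoc_castSucc, T.chain_last, Fin.snoc_last]
      exact (mem_strips.1 hS).2
    · rw [← Fin.castSucc_succ, Fin.snoc_castSucc, Fin.snoc_castSucc, Fin.snoc_castSucc]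
      exact T.tiling_strip i

/-- Tableaux with `N + 1` letters, as pairs of a tableau with `N` letters and a last strip. -/
noncomputable def snocMap (n N : ℕ) (ν δ : YoungDiagram) :
    (Σ κ : ydLE ν.card, RibbonTableau n N κ.1 δ × {S // S ∈ strips n κ.1 ν}) →
      RibbonTableau n (N + 1) ν δ :=
  fun p => snocTab p.2.1 p.2.2.1 p.2.2.2

lemma snocMap_bijective (n N : ℕ) (ν δ : YoungDiagram) :
    Function.Bijective (snocMap n N ν δ) := by
  constructor
  · rintro ⟨⟨κ, hκ⟩, T, S, hS⟩ ⟨⟨κ', hκ'⟩, T', S', hS'⟩ h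
    have h1 := congrArg RibbonTableau.chain h
    have h2 := congrArg RibbonTableau.tiling h
    simp only [snocMap, snocTab] at h1 h2
    have h3 := (Fin.snoc_injective2 (α := fun _ => YoungDiagram) h1).1
    have h4 := Fin.snoc_injective2 (α := fun _ => Finset (Finset Cell)) h2
    obtain rfl : κ = κ' := by
      have := congrFun h3 (Fin.last N)
      rwa [T.chain_last, T'.chain_last] at this
    obtain rfl := tableau_ext h3 h4.1
    obtain rfl := h4.2
    rfl
  · intro T
    have hlast : (Fin.last N).succ = Fin.last (N + 1) := Fin.succ_last N
    have hle : T.chain (Fin.last N).castSucc ≤ ν := by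
      have := T.chain_mono (Fin.last N)
      rwa [hlast, T.chain_last] at this
    have hS : T.tiling (Fin.last N) ∈ strips n (T.chain (Fin.last N).castSucc) ν := by
      refine mem_strips.2 ⟨hle, ?_⟩
      have := T.tiling_strip (Fin.last N)
      rwa [hlast, T.chain_last] at this
    let T0 : RibbonTableau n N (T.chain (Fin.last N).castSucc) δ :=
      { chain := fun i => T.chain i.castSucc
        chain_zero := T.chain_zero
        chain_last := rfl
        chain_mono := fun i => T.chain_mono i.castSucc
        tiling := fun i => T.tiling i.castSucc
        tiling_strip := fun i => T.tiling_strip i.castSucc }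
    refine ⟨⟨⟨_, mem_ydLE.2 (card_mono hle)⟩, T0, _, hS⟩, tableau_ext ?_ ?_⟩
    · funext i
      refine Fin.lastCases ?_ (fun i => ?_) i
      · change Fin.snoc (α := fun _ => YoungDiagram) _ _ (Fin.last _) = _
        rw [Fin.snoc_last, T.chain_last]
      · change Fin.snoc (α := fun _ => YoungDiagram) _ _ i.castSucc = _
        rw [Fin.snoc_castSucc]
    · funext i
      refine Fin.lastCases ?_ (fun i => ?_) i
      · change Fin.snoc (α := fun _ => Finset (Finset Cell)) _ _ (Fin.last _) = _
        rw [Fin.snoc_last]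
      · change Fin.snoc (α := fun _ => Finset (Finset Cell)) _ _ i.castSucc = _
        rw [Fin.snoc_castSucc]

lemma finite_tableau (n N : ℕ) (ν δ : YoungDiagram) : Finite (RibbonTableau n N ν δ) := by
  induction N generalizing ν with
  | zero =>
    have : Subsingleton (RibbonTableau n 0 ν δ) := ⟨fun T T' => tableau_ext
      (by funext i; rw [Fin.fin_one_eq_zero i, T.chain_zero, T'.chain_zero])
      (by funext i; exact i.elim0)⟩
    infer_instance
  | succ N ih => exact Finite.of_surjective _ (snocMap_bijective n N ν δ).2

lemma finsum_tableau (n : ℕ) (q : R) (w : ℕ → ℕ → R) (N : ℕ) (ν δ : YoungDiagram) :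
    ∑ᶠ T : RibbonTableau n N ν δ, q ^ T.spin * ∏ i : Fin N, w i (T.tiling i).card =
      RF n q δ w N ν := by
  induction N generalizing ν with
  | zero =>
    by_cases h : ν = δ
    · subst h
      let T0 : RibbonTableau n 0 ν ν := ⟨fun _ => ν, rfl, rfl, fun i => i.elim0,
        fun i => i.elim0, fun i => i.elim0⟩
      have huniq : ∀ T : RibbonTableau n 0 ν ν, T = T0 := fun T => tableau_ext
        (by funext i; rw [Fin.fin_one_eq_zero i, T.chain_zero]) (by funext i; exact i.elim0)
      rw [finsum_eq_single _ T0 fun T hT => (hT (huniq T)).elim]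
      simp [RF, RibbonTableau.spin]
    · have : IsEmpty (RibbonTableau n 0 ν δ) :=
        ⟨fun T => h (T.chain_last.symm.trans T.chain_zero)⟩
      rw [finsum_of_isEmpty, RF, if_neg h]
  | succ N ih =>
    have hfin : ∀ κ : YoungDiagram, Finite (RibbonTableau n N κ δ) :=
      fun κ => finite_tableau n N κ δ
    let : ∀ κ : YoungDiagram, Fintype (RibbonTableau n N κ δ) :=
      fun κ => Fintype.ofFinite _
    rw [← finsum_comp_equiv (Equiv.ofBijective _ (snocMap_bijective n N ν δ)),
      finsum_eq_sum_of_fintype, Fintype.sum_sigma, RF,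
      ← Finset.sum_coe_sort (ydLE ν.card)]
    refine Finset.sum_congr rfl fun κ _ => ?_
    rw [Fintype.sum_prod_type, ← ih, finsum_eq_sum_of_fintype, SW, Finset.sum_mul]
    refine Finset.sum_congr rfl fun T _ => ?_
    rw [← Finset.sum_coe_sort (strips n κ.1 ν), Finset.mul_sum]
    refine Finset.sum_congr rfl fun S _ => ?_
    simp only [Equiv.ofBijective_apply, snocMap, snocTab, RibbonTableau.spin]
    rw [Fin.sum_univ_castSucc, Fin.prod_univ_castSucc]
    simp only [Fin.snoc_castSucc, Fin.snoc_last, Fin.val_castSucc, Fin.val_last, pow_add]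
    ring

/-- The variables `x_i`, indexed by all natural numbers; those with `i ≥ N` are zero. -/
noncomputable def varW (N : ℕ) (i : ℕ) : MvPolynomial (Fin N) (Polynomial ℤ) :=
  if h : i < N then MvPolynomial.X ⟨i, h⟩ else 0

lemma ribbonFn_eq_RF (n N : ℕ) (ν δ : YoungDiagram) :
    ribbonFn n N ν δ = RF n (MvPolynomial.C Polynomial.X) δ (fun i j => varW N i ^ j) N ν := by
  rw [← finsum_tableau, ribbonFn]
  refine finsum_congr fun T => ?_
  rw [tableauTerm, map_pow]
  congr 1
  refine Finset.prod_congr rfl fun i _ => ?_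
  rw [varW, dif_pos i.2]

lemma coeff_ribbonFn (n N : ℕ) (ν δ : YoungDiagram) (α : ℕ → ℕ) :
    MvPolynomial.coeff (Finsupp.equivFunOnFinite.symm fun i : Fin N => α i)
      (ribbonFn n N ν δ) = RF n Polynomial.X δ (indW α) N ν := by
  rw [← finsum_tableau, ribbonFn]
  have := finite_tableau n N ν δ
  let := Fintype.ofFinite (RibbonTableau n N ν δ)
  rw [finsum_eq_sum_of_fintype, finsum_eq_sum_of_fintype, MvPolynomial.coeff_sum]
  refine Finset.sum_congr rfl fun T _ => ?_
  rw [tableauTerm, MvPolynomial.coeff_C_mul]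
  congr 1
  have hmon : (∏ i : Fin N, (MvPolynomial.X i : MvPolynomial (Fin N) (Polynomial ℤ)) ^
      (T.tiling i).card) =
      MvPolynomial.monomial (Finsupp.equivFunOnFinite.symm fun i => (T.tiling i).card) 1 := by
    rw [MvPolynomial.monomial_eq, map_one, one_mul, Finsupp.prod_fintype _ _ (by simp)]
    rfl
  rw [hmon, MvPolynomial.coeff_monomial]
  simp only [indW]
  rw [Finset.prod_ite_zero]
  simp only [Finset.prod_const_one, EmbeddingLike.apply_eq_iff_eq, funext_iff, Finset.mem_univ,
    true_implies]

end Tableaux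

/-! ### Cores -/

section Cores

variable {R : Type*} [CommRing R]

lemma ribbonStep_card {n : ℕ} {ν κ : YoungDiagram} (h : RibbonStep n ν κ) :
    ν.card = κ.card + n := by
  have h2 : κ.cells ⊆ ν.cells := YoungDiagram.cells_subset_iff.2 h.1
  have h1 := h.2.1
  rw [Finset.card_sdiff_of_subset h2] at h1
  have h3 := Finset.card_le_card h2
  change ν.cells.card = κ.cells.card + n
  omega

/-- Ribbon removal is confluent: two different removable ribbons can be removed in either order. -/
lemma ribbonStep_diamond {n : ℕ} (hn : 1 ≤ n) {ν κ κ' : YoungDiagram} (h : RibbonStep n ν κ)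
    (h' : RibbonStep n ν κ') :
    ∃ τ, Relation.ReflGen (RibbonStep n) κ τ ∧ Relation.ReflTransGen (RibbonStep n) κ' τ := by
  obtain ⟨i, hi⟩ := (ribbonStep_iff hn).1 h
  obtain ⟨j, hj⟩ := (ribbonStep_iff hn).1 h'
  by_cases hij : i = j
  · subst hij
    obtain rfl := hi.unique_left hj
    exact ⟨κ, .refl, .refl⟩
  have a1 := (exists_remove_iff hn i ν).1 ⟨κ, hi⟩
  have a2 := (exists_remove_iff hn j ν).1 ⟨κ', hj⟩
  have hin : j ≠ i + n := by rintro rfl; omega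
  have hjn : i ≠ j + n := by rintro rfl; omega
  have e1 : ∃ τ, Rel n j τ κ := by
    rw [exists_remove_iff hn]
    have b1 := hi j
    have b2 := hi (j + 1)
    have b3 := hi (j + n)
    have b4 := hi (j + n + 1)
    split_ifs at b1 b2 b3 b4 <;> constructor <;> omega
  have e2 : ∃ τ, Rel n i τ κ' := by
    rw [exists_remove_iff hn]
    have b1 := hj i
    have b2 := hj (i + 1)
    have b3 := hj (i + n)
    have b4 := hj (i + n + 1)
    split_ifs at b1 b2 b3 b4 <;> constructor <;> omega
  obtain ⟨τ, hτ⟩ := e1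
  obtain ⟨τ', hτ'⟩ := e2
  obtain rfl : τ = τ' := prof_ext fun d => by
    have := hi d; have := hj d; have := hτ d; have := hτ' d
    omega
  exact ⟨τ, .single ((ribbonStep_iff hn).2 ⟨j, hτ⟩),
    .single ((ribbonStep_iff hn).2 ⟨i, hτ'⟩)⟩

lemma exists_core {n : ℕ} (hn : 1 ≤ n) (ν : YoungDiagram) : ∃ δ, IsNCoreOf n δ ν := by
  induction hm : ν.card using Nat.strong_induction_on generalizing ν with
  | _ m ih =>
    by_cases h : ∃ κ, RibbonStep n ν κ
    · obtain ⟨κ, hκ⟩ := h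
      have := ribbonStep_card hκ
      obtain ⟨δ, h1, h2⟩ := ih κ.card (by omega) κ rfl
      exact ⟨δ, .head hκ h1, h2⟩
    · exact ⟨ν, .refl, fun κ hκ => h ⟨κ, hκ⟩⟩

lemma nCore_spec {n : ℕ} (hn : 1 ≤ n) (ν : YoungDiagram) : IsNCoreOf n (nCore n ν) ν := by
  have h := exists_core hn ν
  rw [nCore, dif_pos h]
  exact h.choose_spec

lemma eq_of_core {n : ℕ} {δ κ : YoungDiagram} (hδ : ∀ κ, ¬ RibbonStep n δ κ)
    (h : Relation.ReflTransGen (RibbonStep n) δ κ) : δ = κ := by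
  rcases Relation.ReflTransGen.cases_head h with h | ⟨τ, h, -⟩
  · exact h
  · exact (hδ τ h).elim

lemma nCore_eq {n : ℕ} (hn : 1 ≤ n) {ν μ : YoungDiagram}
    (h : Relation.ReflTransGen (RibbonStep n) ν μ) : nCore n ν = nCore n μ := by
  obtain ⟨h1, h2⟩ := nCore_spec hn ν
  obtain ⟨h3, h4⟩ := nCore_spec hn μ
  obtain ⟨τ, h5, h6⟩ := Relation.church_rosser
    (fun _ _ _ a b => ribbonStep_diamond hn a b) h1 (h.trans h3)
  rw [eq_of_core h2 h5, eq_of_core h4 h6]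

lemma strip_steps {n : ℕ} (hn : 1 ≤ n) {κ ν : YoungDiagram} {T : Finset (Finset Cell)}
    (hT : T ∈ strips n κ ν) : Relation.ReflTransGen (RibbonStep n) ν κ := by
  induction hm : T.card generalizing T ν with
  | zero =>
    rw [Finset.card_eq_zero] at hm
    subst hm
    obtain ⟨hle, hT⟩ := mem_strips.1 hT
    rw [(empty_tiling hle).1 hT]
  | succ m ih =>
    obtain ⟨hle, hT⟩ := mem_strips.1 hT
    have hne : T.Nonempty := Finset.card_pos.1 (by omega)
    choose! ix rh hix using fun R (hR : R ∈ T) => exists_ribAt hn (hT.1.1 R hR)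
    obtain ⟨R, hR, hmax⟩ := Finset.exists_max_image T ix hne
    obtain ⟨τ, hrel, -, hle', hT'⟩ := tiling_remove hn hle hT hR (hix R hR)
      fun R' hR' a' ρ' hA' => by
        rw [hA'.index_unique hn (hix R' hR')]; exact hmax R' hR'
    refine .head ((ribbonStep_iff hn).2 ⟨_, hrel⟩) (ih (mem_strips.2 ⟨hle', hT'⟩) ?_)
    rw [Finset.card_erase_of_mem hR]; omega

lemma tileable_trans {n : ℕ} {μ κ ν : YoungDiagram} (h1 : μ ≤ κ) (h2 : κ ≤ ν)
    (h : Tileable n (κ.cells \ μ.cells)) (h' : Tileable n (ν.cells \ κ.cells)) :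
    Tileable n (ν.cells \ μ.cells) := by
  obtain ⟨T, hT1, hT2, hT3⟩ := h
  obtain ⟨T', hT1', hT2', hT3'⟩ := h'
  have hd : ∀ A ∈ T, ∀ B ∈ T', Disjoint A B := by
    intro A hA B hB
    refine Finset.disjoint_left.2 fun c hc hc' => ?_
    have e1 : c ∈ κ.cells \ μ.cells := hT3 ▸ Finset.mem_biUnion.2 ⟨A, hA, hc⟩
    have e2 : c ∈ ν.cells \ κ.cells := hT3' ▸ Finset.mem_biUnion.2 ⟨B, hB, hc'⟩
    exact (mem_skew.1 e2).2 (mem_skew.1 e1).1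
  refine ⟨T ∪ T', fun A hA => (Finset.mem_union.1 hA).elim (hT1 A) (hT1' A), ?_, ?_⟩
  · intro A hA B hB hne
    rcases Finset.mem_union.1 (Finset.mem_coe.1 hA) with hA | hA <;>
      rcases Finset.mem_union.1 (Finset.mem_coe.1 hB) with hB | hB
    · exact hT2 hA hB hne
    · exact hd A hA B hB
    · exact (hd B hB A hA).symm
    · exact hT2' hA hB hne
  · rw [Finset.union_biUnion, hT3, hT3']
    ext c
    rw [Finset.mem_union, mem_skew, mem_skew, mem_skew]
    constructor
    · rintro (⟨e1, e2⟩ | ⟨e1, e2⟩)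
      · exact ⟨h2 e1, e2⟩
      · exact ⟨e1, fun e3 => e2 (h1 e3)⟩
    · rintro ⟨e1, e2⟩
      by_cases e3 : c ∈ κ
      · exact Or.inl ⟨e3, e2⟩
      · exact Or.inr ⟨e1, e3⟩

lemma RF_ind_support {n : ℕ} (hn : 1 ≤ n) {q : R} {μ : YoungDiagram} {α : ℕ → ℕ} {L : ℕ}
    {ν : YoungDiagram} (h : RF n q μ (indW α) L ν ≠ 0) :
    μ ≤ ν ∧ Tileable n (ν.cells \ μ.cells) ∧ Relation.ReflTransGen (RibbonStep n) ν μ := by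
  induction L generalizing ν with
  | zero =>
    simp only [RF, ne_eq, ite_eq_right_iff, Classical.not_imp] at h
    obtain ⟨rfl, -⟩ := h
    exact ⟨le_rfl, ⟨∅, ((empty_tiling le_rfl).2 rfl).1⟩, .refl⟩
  | succ L ih =>
    obtain ⟨κ, hκ, hne⟩ := Finset.exists_ne_zero_of_sum_ne_zero h
    obtain ⟨h1, h2, h3⟩ := ih (left_ne_zero_of_mul hne)
    obtain ⟨hle, -, T, hT, -⟩ := SW_ind_ne_zero (right_ne_zero_of_mul hne)
    exact ⟨h1.trans hle, tileable_trans h1 hle h2 ⟨T, (mem_strips.1 hT).2.1⟩,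
      (strip_steps hn hT).trans h3⟩

lemma bot_core {n : ℕ} (hn : 1 ≤ n) (κ : YoungDiagram) : ¬ RibbonStep n ⊥ κ := by
  intro h
  have := ribbonStep_card h
  have h0 : (⊥ : YoungDiagram).card = 0 := by simp [YoungDiagram.card]
  omega

end Cores

/-! ### Unitriangularity of the Kostka matrix -/

section Kostka

variable {R : Type*} [CommRing R]

/-- The sum of the row indices of the cells of a diagram. -/
def bsum (ρ : YoungDiagram) : ℕ := ∑ c ∈ ρ.cells, c.1

/-- The first `L` rows of a diagram. -/
def truncY (α : YoungDiagram) (L : ℕ) : YoungDiagram where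
  cells := α.cells.filter fun c => c.1 < L
  isLowerSet := by
    intro c c' hle hc
    simp only [Finset.coe_filter, Set.mem_ofPred_eq, YoungDiagram.mem_cells] at hc ⊢
    exact ⟨mem_of_le hle.1 hle.2 hc.1, lt_of_le_of_lt hle.1 hc.2⟩

lemma mem_truncY {α : YoungDiagram} {L : ℕ} {c : Cell} : c ∈ truncY α L ↔ c ∈ α ∧ c.1 < L := by
  rw [← YoungDiagram.mem_cells, truncY]
  simp

lemma cells_lt_card {ρ : YoungDiagram} {c : Cell} (h : c ∈ ρ) : c.1 < ρ.card := by
  have := ct_lt_card (mem_of_le (c := (c.1, 0)) (c' := c) le_rfl (Nat.zero_le _) h)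
  simp only [ct] at this
  omega

lemma truncY_eq {ρ : YoungDiagram} {L : ℕ} (h : ρ.card ≤ L) : truncY ρ L = ρ := by
  refine le_antisymm (fun c hc => (mem_truncY.1 hc).1) fun c hc => ?_
  exact mem_truncY.2 ⟨hc, (cells_lt_card hc).trans_le h⟩

lemma row_eq_filter (ρ : YoungDiagram) (i : ℕ) :
    (ρ.cells.filter fun c => c.1 = i).card = ρ.rowLen i := by
  rw [YoungDiagram.rowLen_eq_card]; rfl

lemma card_eq_sum_rowLen {ρ : YoungDiagram} {L : ℕ} (h : ∀ c ∈ ρ, c.1 < L) :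
    ρ.card = ∑ i ∈ Finset.range L, ρ.rowLen i := by
  rw [YoungDiagram.card, Finset.card_eq_sum_card_fiberwise (f := Prod.fst) (t := Finset.range L)
    fun c hc => Finset.mem_coe.2 (Finset.mem_range.2 (h c ((YoungDiagram.mem_cells _).1 hc)))]
  exact Finset.sum_congr rfl fun i _ => row_eq_filter ρ i

lemma bsum_eq {ρ : YoungDiagram} {L : ℕ} (h : ∀ c ∈ ρ, c.1 < L) :
    bsum ρ = ∑ i ∈ Finset.range L, i * ρ.rowLen i := by
  rw [bsum, ← Finset.sum_fiberwise_of_maps_to (t := Finset.range L) (g := Prod.fst)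
    fun c hc => Finset.mem_range.2 (h c ((YoungDiagram.mem_cells _).1 hc))]
  refine Finset.sum_congr rfl fun i _ => ?_
  rw [Finset.sum_congr rfl fun c hc => (Finset.mem_filter.1 hc).2, Finset.sum_const,
    row_eq_filter, smul_eq_mul, mul_comm]

lemma rowLen_truncY {α : YoungDiagram} {L i : ℕ} (h : i < L) :
    (truncY α L).rowLen i = α.rowLen i := by
  rw [← row_eq_filter, ← row_eq_filter]
  congr 1
  ext c
  simp only [Finset.mem_filter, YoungDiagram.mem_cells, mem_truncY]
  constructor
  · rintro ⟨⟨h1, -⟩, h2⟩; exact ⟨h1, h2⟩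
  · rintro ⟨h1, rfl⟩; exact ⟨⟨h1, h⟩, rfl⟩

lemma bsum_truncY (α : YoungDiagram) (L : ℕ) :
    bsum (truncY α L) = ∑ i ∈ Finset.range L, i * α.rowLen i := by
  rw [bsum_eq fun c hc => (mem_truncY.1 hc).2]
  exact Finset.sum_congr rfl fun i hi => by rw [rowLen_truncY (Finset.mem_range.1 hi)]

lemma one_ribbon_eq {S : Finset Cell} (h : IsRibbon 1 S) {c : Cell} (hc : c ∈ S) : S = {c} := by
  obtain ⟨e, rfl⟩ := Finset.card_eq_one.1 h.1
  rw [Finset.mem_singleton.1 hc]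

lemma one_ribbon_singleton (c : Cell) : IsRibbon 1 {c} := by
  refine ⟨Finset.card_singleton c, ?_, ?_, ?_⟩
  · intro a ha b hb
    rw [Finset.mem_singleton.1 ha, Finset.mem_singleton.1 hb]
    exact .refl
  · rintro ⟨i, j, h1, h2, -⟩
    rw [Finset.mem_singleton] at h1 h2
    have := congrArg Prod.fst (h1.trans h2.symm)
    simp at this
  · let lam : YoungDiagram := ⟨Finset.range (c.1 + 1) ×ˢ Finset.range (c.2 + 1), by
      intro a b hle ha
      have h1 := hle.1
      have h2 := hle.2
      simp only [Finset.coe_product, Set.mem_prod, Finset.mem_coe, Finset.mem_range] at ha ⊢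
      omega⟩
    let mu : YoungDiagram :=
      ⟨(Finset.range (c.1 + 1) ×ˢ Finset.range (c.2 + 1)).erase c, by
        intro a b hle ha
        have h1 := hle.1
        have h2 := hle.2
        simp only [Finset.coe_erase, Set.mem_sdiff, Finset.mem_coe, Finset.mem_product,
          Finset.mem_range, Set.mem_singleton_iff] at ha ⊢
        refine ⟨by omega, ?_⟩
        rintro rfl
        exact ha.2 (Prod.ext (by omega) (by omega))⟩
    refine ⟨lam, mu, YoungDiagram.cells_subset_iff.1 (Finset.erase_subset _ _), ?_⟩
    change _ = (Finset.range (c.1 + 1) ×ˢ Finset.range (c.2 + 1)) \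
      (Finset.range (c.1 + 1) ×ˢ Finset.range (c.2 + 1)).erase c
    rw [Finset.sdiff_erase (by simp)]
    simp

/-- One step of a semistandard tableau whose letters below `L` occupy rows below `L`. -/
lemma strip_bound {κ ρ : YoungDiagram} {L : ℕ} (hκ : ∀ c ∈ κ, c.1 < L)
    {T : Finset (Finset Cell)} (hT : T ∈ strips 1 κ ρ) :
    (∀ c ∈ ρ, c.1 < L + 1) ∧ bsum ρ ≤ bsum κ + L * T.card ∧
      (bsum ρ = bsum κ + L * T.card → ∀ c ∈ ρ, c ∉ κ → c.1 = L) := by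
  have hcard := strips_card hT
  obtain ⟨hle, hT⟩ := mem_strips.1 hT
  have h1 : ∀ c ∈ ρ, c ∉ κ → c.1 ≤ L := by
    intro c hc hc'
    by_contra hlt
    obtain ⟨S, hS, hcS⟩ := tiling_cover hT hc hc'
    have hS1 := one_ribbon_eq (hT.1.1 S hS) hcS
    have htop : TopRightCell S c := by
      rw [hS1]
      refine ⟨Finset.mem_singleton_self c, fun d hd => ?_⟩
      rw [Finset.mem_singleton.1 hd]; simp
    rcases hT.2 S hS c htop with h0 | h0
    · omega
    · refine h0 (mem_skew.2 ⟨mem_of_le (c' := c) (Nat.sub_le _ _) le_rfl hc, fun hk => ?_⟩)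
      have := hκ _ hk
      simp only at this
      omega
  have hsub : κ.cells ⊆ ρ.cells := YoungDiagram.cells_subset_iff.2 hle
  have hsum : bsum ρ = bsum κ + ∑ c ∈ ρ.cells \ κ.cells, c.1 := by
    rw [bsum, bsum, add_comm, Finset.sum_sdiff hsub]
  have hc2 : (ρ.cells \ κ.cells).card = T.card := by
    rw [Finset.card_sdiff_of_subset hsub]
    change ρ.card - κ.card = _
    omega
  have h2 : ∀ c ∈ ρ.cells \ κ.cells, c.1 ≤ L := fun c hc =>
    h1 c (mem_skew.1 hc).1 (mem_skew.1 hc).2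
  have h3 : ∑ _c ∈ ρ.cells \ κ.cells, L = L * T.card := by
    rw [Finset.sum_const, hc2, smul_eq_mul, mul_comm]
  refine ⟨fun c hc => ?_, ?_, fun heq c hc hc' => ?_⟩
  · by_cases hk : c ∈ κ
    · exact (hκ c hk).trans (Nat.lt_succ_self L)
    · exact Nat.lt_succ_of_le (h1 c hc hk)
  · rw [hsum, ← h3]
    exact Nat.add_le_add_left (Finset.sum_le_sum h2) _
  · rw [hsum, ← h3, Nat.add_left_cancel_iff] at heq
    exact (Finset.sum_eq_sum_iff_of_le h2).1 heq c (mem_skew.2 ⟨hc, hc'⟩)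

lemma kostka_bound {q : R} (α : YoungDiagram) (L : ℕ) {ρ : YoungDiagram}
    (h : RF 1 q ⊥ (indW α.rowLen) L ρ ≠ 0) :
    (∀ c ∈ ρ, c.1 < L) ∧ bsum ρ ≤ bsum (truncY α L) ∧
      (bsum ρ = bsum (truncY α L) → ρ = truncY α L) := by
  rw [bsum_truncY]
  induction L generalizing ρ with
  | zero =>
    simp only [RF, ne_eq, ite_eq_right_iff, Classical.not_imp] at h
    obtain ⟨rfl, -⟩ := h
    refine ⟨by simp, by simp [bsum], fun _ => le_antisymm bot_le fun c hc => ?_⟩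
    exact absurd (mem_truncY.1 hc).2 (Nat.not_lt_zero _)
  | succ L ih =>
    obtain ⟨κ, hκ, hne⟩ := Finset.exists_ne_zero_of_sum_ne_zero h
    obtain ⟨h1, h2, h3⟩ := ih (left_ne_zero_of_mul hne)
    obtain ⟨hle, hcard, T, hT, hTc⟩ := SW_ind_ne_zero (right_ne_zero_of_mul hne)
    obtain ⟨b1, b2, b3⟩ := strip_bound h1 hT
    rw [hTc] at b2 b3
    rw [Finset.sum_range_succ]
    refine ⟨b1, by omega, fun heq => ?_⟩
    have hκe := h3 (by omega)
    have hrow := b3 (by omega)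
    have hlen : ρ.rowLen L = α.rowLen L := by
      rw [← row_eq_filter]
      have : ρ.cells.filter (fun c => c.1 = L) = ρ.cells \ κ.cells := by
        ext c
        rw [Finset.mem_filter, mem_skew, YoungDiagram.mem_cells]
        constructor
        · rintro ⟨e1, e2⟩
          exact ⟨e1, fun e3 => by have := h1 c e3; omega⟩
        · rintro ⟨e1, e2⟩
          exact ⟨e1, hrow c e1 e2⟩
      rw [this, Finset.card_sdiff_of_subset (YoungDiagram.cells_subset_iff.2 hle)]
      change ρ.card - κ.card = _
      omega
    have hmem : ∀ c : Cell, c.1 = L → (c ∈ ρ ↔ c ∈ α) := by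
      rintro ⟨i, j⟩ rfl
      rw [YoungDiagram.mem_iff_lt_rowLen, YoungDiagram.mem_iff_lt_rowLen, hlen]
    refine le_antisymm (fun c hc => ?_) fun c hc => ?_
    · have hlt := b1 c hc
      by_cases hk : c ∈ κ
      · rw [hκe] at hk
        exact mem_truncY.2 ⟨(mem_truncY.1 hk).1, hlt⟩
      · exact mem_truncY.2 ⟨(hmem c (hrow c hc hk)).1 hc, hlt⟩
    · obtain ⟨e1, e2⟩ := mem_truncY.1 hc
      rcases Nat.lt_succ_iff_lt_or_eq.1 e2 with e3 | e3
      · exact hle (by rw [hκe]; exact mem_truncY.2 ⟨e1, e3⟩)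
      · exact (hmem c e3).2 e1

lemma SW_row (q : R) {κ ρ : YoungDiagram} (hle : κ ≤ ρ) {L k : ℕ}
    (hrow : ∀ c ∈ ρ, c ∉ κ → c.1 = L) (hk : (ρ.cells \ κ.cells).card = k) :
    SW 1 q (fun j => if j = k then 1 else 0) κ ρ = 1 := by
  set T0 : Finset (Finset Cell) := (ρ.cells \ κ.cells).image singleton with hT0
  have hmem : ∀ S : Finset Cell, S ∈ T0 ↔ ∃ c ∈ ρ.cells \ κ.cells, {c} = S := by
    intro S; rw [hT0, Finset.mem_image]
  have hs : strips 1 κ ρ = {T0} := by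
    ext T
    rw [mem_strips, Finset.mem_singleton]
    constructor
    · rintro ⟨-, hT⟩
      ext S
      rw [hmem]
      constructor
      · intro hS
        obtain ⟨c, hc⟩ := Finset.card_pos.1 (by rw [(hT.1.1 S hS).1]; exact Nat.one_pos)
        exact ⟨c, mem_skew.2 (tiling_mem hT hS hc), (one_ribbon_eq (hT.1.1 S hS) hc).symm⟩
      · rintro ⟨c, hc, rfl⟩
        obtain ⟨S, hS, hcS⟩ := tiling_cover hT (mem_skew.1 hc).1 (mem_skew.1 hc).2
        rwa [← one_ribbon_eq (hT.1.1 S hS) hcS]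
    · rintro rfl
      refine ⟨hle, ⟨fun S hS => ?_, ?_, ?_⟩, ?_⟩
      · obtain ⟨c, -, rfl⟩ := (hmem S).1 hS
        exact one_ribbon_singleton c
      · intro S hS S' hS' hne
        obtain ⟨c, -, rfl⟩ := (hmem S).1 hS
        obtain ⟨c', -, rfl⟩ := (hmem S').1 hS'
        rw [Finset.disjoint_singleton]
        rintro rfl
        exact hne rfl
      · ext c
        rw [Finset.mem_biUnion]
        constructor
        · rintro ⟨S, hS, hc⟩
          obtain ⟨c', hc', rfl⟩ := (hmem S).1 hS
          rwa [Finset.mem_singleton.1 hc]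
        · intro hc
          exact ⟨{c}, (hmem _).2 ⟨c, hc, rfl⟩, Finset.mem_singleton_self c⟩
      · intro S hS c hc
        obtain ⟨c', hc', rfl⟩ := (hmem S).1 hS
        obtain rfl := Finset.mem_singleton.1 hc.1
        by_cases h0 : c.1 = 0
        · exact Or.inl h0
        · refine Or.inr fun h1 => ?_
          have e1 := hrow _ (mem_skew.1 h1).1 (mem_skew.1 h1).2
          have e2 := hrow _ (mem_skew.1 hc').1 (mem_skew.1 hc').2
          simp only at e1
          omega
  have hspin : tilingSpin T0 = 0 := by
    refine Finset.sum_eq_zero fun S hS => ?_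
    obtain ⟨c, -, rfl⟩ := (hmem S).1 hS
    simp [ribbonSpin]
  have hcard : T0.card = k := by
    rw [hT0, Finset.card_image_of_injective _ Finset.singleton_injective, hk]
  rw [SW, hs, Finset.sum_singleton, hspin, if_pos hcard]
  simp

lemma kostka_diag (q : R) (α : YoungDiagram) (L : ℕ) :
    RF 1 q ⊥ (indW α.rowLen) L (truncY α L) = 1 := by
  induction L with
  | zero =>
    have : truncY α 0 = ⊥ := le_bot_iff.1 fun c hc =>
      absurd (mem_truncY.1 hc).2 (Nat.not_lt_zero _)
    rw [this]; simp [RF]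
  | succ L ih =>
    have hle : truncY α L ≤ truncY α (L + 1) := fun c hc =>
      mem_truncY.2 ⟨(mem_truncY.1 hc).1, (mem_truncY.1 hc).2.trans (Nat.lt_succ_self L)⟩
    rw [RF, Finset.sum_eq_single (truncY α L), ih, one_mul]
    · refine SW_row q hle (L := L) (fun c hc hc' => ?_) ?_
      · rw [mem_truncY] at hc hc'
        by_contra hne
        exact hc' ⟨hc.1, by omega⟩
      · rw [← row_eq_filter]
        congr 1
        ext c
        rw [mem_skew, mem_truncY, mem_truncY, Finset.mem_filter, YoungDiagram.mem_cells]
        constructor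
        · rintro ⟨⟨e1, e2⟩, e3⟩
          refine ⟨e1, ?_⟩
          by_contra hne
          exact e3 ⟨e1, by omega⟩
        · rintro ⟨e1, e2⟩
          exact ⟨⟨e1, by omega⟩, fun e3 => by omega⟩
    · intro κ _ hne
      by_contra h0
      obtain ⟨h1, h2, h3⟩ := kostka_bound α L (left_ne_zero_of_mul h0)
      obtain ⟨-, -, T, hT, hTc⟩ := SW_ind_ne_zero (right_ne_zero_of_mul h0)
      have h4 := (strip_bound h1 hT).2.1
      rw [bsum_truncY, Finset.sum_range_succ, hTc] at h4
      rw [bsum_truncY] at h2 h3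
      exact hne (h3 (by omega))
    · intro h
      exact (h (mem_ydLE.2 (card_mono hle))).elim

/-- Solvability of unitriangular linear systems. -/
lemma exists_solution {ι : Type*} (b : ι → ℕ) (K : ι → ι → R) (hdiag : ∀ i, K i i = 1)
    (P : Finset ι) (htri : ∀ i ∈ P, ∀ j ∈ P, K i j ≠ 0 → i = j ∨ b i < b j) (t : ι → R) :
    ∃ k : ι → R, ∀ i ∈ P, ∑ j ∈ P, K i j * k j = t i := by
  induction P using Finset.induction_on_max_value b generalizing t with
  | empty => exact ⟨0, by simp⟩
  | insert a s ha hmax ih =>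
    obtain ⟨k, hk⟩ := ih (fun i hi j hj => htri i (Finset.mem_insert_of_mem hi) j
      (Finset.mem_insert_of_mem hj)) (fun i => t i - K i a * t a)
    refine ⟨fun j => if j = a then t a else k j, fun i hi => ?_⟩
    rw [Finset.sum_insert ha]
    simp only [if_true]
    have hs : ∑ j ∈ s, K i j * (if j = a then t a else k j) = ∑ j ∈ s, K i j * k j :=
      Finset.sum_congr rfl fun j hj => by
        rw [if_neg (fun h : j = a => ha (h ▸ hj))]
    rw [hs]
    rcases Finset.mem_insert.1 hi with rfl | hi
    · rw [hdiag, one_mul, Finset.sum_eq_zero, add_zero]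
      intro j hj
      have : K i j = 0 := by
        by_contra h0
        rcases htri i (Finset.mem_insert_self _ _) j (Finset.mem_insert_of_mem hj) h0 with h | h
        · exact ha (h ▸ hj)
        · have := hmax j hj; omega
      rw [this, zero_mul]
    · rw [hk i hi]; ring

/-- The partitions of `m`, as Young diagrams. -/
noncomputable def ydEQ (m : ℕ) : Finset YoungDiagram := (ydLE m).filter fun ρ => ρ.card = m

lemma mem_ydEQ {m : ℕ} {ρ : YoungDiagram} : ρ ∈ ydEQ m ↔ ρ.card = m := by
  rw [ydEQ, Finset.mem_filter, mem_ydLE]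
  exact ⟨fun h => h.2, fun h => ⟨h.le, h⟩⟩

/-- The Kostka matrix `RF 1 q ⊥ (indW α.rowLen) L ρ` (shape `ρ`, weight `α`) can be inverted; `k`
holds the entries of its inverse indexed by `lam`. -/
lemma exists_inverse_kostka (q : R) (lam : YoungDiagram) {L : ℕ} (hL : lam.card ≤ L) :
    ∃ k : YoungDiagram → R, ∀ ρ ∈ ydEQ lam.card,
      ∑ α ∈ ydEQ lam.card, RF 1 q ⊥ (indW α.rowLen) L ρ * k α = if ρ = lam then 1 else 0 := by
  have h := exists_solution bsum
    (fun ρ α => if ρ.card = lam.card ∧ α.card = lam.card then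
      RF 1 q ⊥ (indW α.rowLen) L ρ else if ρ = α then 1 else 0) ?_ (ydEQ lam.card) ?_
    (fun ρ => if ρ = lam then 1 else 0)
  · obtain ⟨k, hk⟩ := h
    refine ⟨k, fun ρ hρ => ?_⟩
    rw [← hk ρ hρ]
    refine Finset.sum_congr rfl fun α hα => ?_
    rw [if_pos ⟨mem_ydEQ.1 hρ, mem_ydEQ.1 hα⟩]
  · intro α
    simp only [and_self, if_true]
    split_ifs with h
    · have := kostka_diag q α L
      rwa [truncY_eq (by omega)] at this
    · rfl
  · intro ρ hρ α hα hne
    rw [mem_ydEQ] at hρ hα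
    rw [if_pos ⟨hρ, hα⟩] at hne
    obtain ⟨-, h2, h3⟩ := kostka_bound α L hne
    rw [truncY_eq (by omega)] at h2 h3
    rcases lt_or_eq_of_le h2 with h | h
    · exact Or.inr h
    · exact Or.inl (h3 h)

end Kostka

/-! ### The ribbon Littlewood–Richardson rule -/

section Assembly

lemma bot_card : (⊥ : YoungDiagram).card = 0 := by simp [YoungDiagram.card]

lemma RF_bot {R : Type*} [CommRing R] {n : ℕ} (hn : 1 ≤ n) (q : R) (x : ℕ → R) (N : ℕ) :
    RF n q ⊥ (fun i j => x i ^ j) N ⊥ = 1 := by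
  induction N with
  | zero => simp [RF]
  | succ N ih =>
    rw [RF, bot_card, Finset.sum_eq_single ⊥]
    · rw [ih, one_mul, SW, Finset.sum_eq_single ∅]
      · simp [tilingSpin]
      · intro T hT hne
        exact (hne (strips_of_core hn (bot_core hn) hT).1).elim
      · intro h
        exact (h (mem_strips.2 ⟨le_rfl, (empty_tiling le_rfl).2 rfl⟩)).elim
    · intro κ hκ hne
      rw [mem_ydLE, Nat.le_zero] at hκ
      refine (hne (le_antisymm (fun c hc => ?_) bot_le)).elim
      have := cells_lt_card ((YoungDiagram.mem_cells _).1 hc)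
      omega
    · intro h
      exact (h (mem_ydLE.2 bot_card.le)).elim

lemma sum_rowLen {ρ : YoungDiagram} {L : ℕ} (h : ρ.card ≤ L) :
    ∑ i ∈ Finset.range L, ρ.rowLen i = ρ.card :=
  (card_eq_sum_rowLen fun _ hc => (cells_lt_card hc).trans_le h).symm

lemma C_RF_ind {σ : Type*} (n : ℕ) (δ : YoungDiagram) (α : ℕ → ℕ) (L : ℕ) (ν : YoungDiagram) :
    (MvPolynomial.C (RF n Polynomial.X δ (indW α) L ν) : MvPolynomial σ (Polynomial ℤ)) =
      RF n (MvPolynomial.C Polynomial.X) δ (indW α) L ν := by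
  rw [map_RF]
  congr 1
  funext i j
  simp only [indW]
  split_ifs <;> simp

/-- A Schur polynomial is the combination of products of complete homogeneous symmetric
polynomials (the coefficients of `H`) given by a row `k` of the inverse Kostka matrix. -/
lemma schurPoly_eq_h {lam : YoungDiagram} {L : ℕ} (hL : lam.card ≤ L)
    {k : YoungDiagram → Polynomial ℤ}
    (hk : ∀ ρ ∈ ydEQ lam.card, ∑ α ∈ ydEQ lam.card,
      RF 1 Polynomial.X ⊥ (indW α.rowLen) L ρ * k α = if ρ = lam then 1 else 0)
    (M : ℕ) (H : PowerSeries (MvPolynomial (Fin M) (Polynomial ℤ)))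
    (hH : H * ∏ t ∈ Finset.range M, (1 - PowerSeries.C (varW M t) * PowerSeries.X) = 1) :
    schurPoly M lam = ∑ α ∈ ydEQ lam.card,
      MvPolynomial.C (k α) * ∏ i ∈ Finset.range L, PowerSeries.coeff (α.rowLen i) H := by
  have h1 : ∀ α ∈ ydEQ lam.card, ∏ i ∈ Finset.range L, PowerSeries.coeff (α.rowLen i) H =
      ∑ ρ ∈ ydEQ lam.card, MvPolynomial.C (RF 1 Polynomial.X ⊥ (indW α.rowLen) L ρ) *
        schurPoly M ρ := by
    intro α hα
    rw [mem_ydEQ] at hα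
    have h2 := pieri_iterate le_rfl (MvPolynomial.C Polynomial.X) (bot_core le_rfl) (varW M) M H
      (by simpa using hH) α.rowLen L ⊥ (M := lam.card)
      (by rw [bot_card, sum_rowLen (by omega)]; omega)
    rw [RF_bot le_rfl, mul_one] at h2
    rw [h2, ydEQ, Finset.sum_filter]
    refine Finset.sum_congr rfl fun ρ _ => ?_
    rw [← C_RF_ind]
    split_ifs with hρ
    · rw [schurPoly, ribbonFn_eq_RF]
    · have : RF 1 Polynomial.X ⊥ (indW α.rowLen) L ρ = (0 : Polynomial ℤ) := by
        by_contra h0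
        have := RF_ind_card h0
        rw [bot_card, sum_rowLen (by omega)] at this
        omega
      rw [this, map_zero, zero_mul]
  rw [Finset.sum_congr rfl fun α hα => by rw [h1 α hα, Finset.mul_sum], Finset.sum_comm]
  have h3 : ∀ ρ ∈ ydEQ lam.card, ∑ α ∈ ydEQ lam.card, MvPolynomial.C (k α) *
      (MvPolynomial.C (RF 1 Polynomial.X ⊥ (indW α.rowLen) L ρ) * schurPoly M ρ) =
      if ρ = lam then schurPoly M ρ else 0 := by
    intro ρ hρ
    rw [show (if ρ = lam then schurPoly M ρ else 0) =
      MvPolynomial.C (if ρ = lam then 1 else 0) * schurPoly M ρ by split_ifs <;> simp,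
      ← hk ρ hρ, map_sum, Finset.sum_mul]
    refine Finset.sum_congr rfl fun α _ => ?_
    rw [map_mul]; ring
  rw [Finset.sum_congr rfl h3, Finset.sum_ite_eq', if_pos (mem_ydEQ.2 rfl)]

/-- The generating function of the complete homogeneous symmetric polynomials exists. -/
lemma exists_inverse {R : Type*} [CommRing R] (x : ℕ → R) (M : ℕ) :
    ∃ H : PowerSeries R,
      H * ∏ t ∈ Finset.range M, (1 - PowerSeries.C (x t) * PowerSeries.X) = 1 := by
  refine ⟨PowerSeries.invOfUnit
    (∏ t ∈ Finset.range M, (1 - PowerSeries.C (x t) * PowerSeries.X)) 1, ?_⟩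
  rw [mul_comm]
  refine PowerSeries.mul_invOfUnit _ 1 ?_
  rw [map_prod]
  simp

/-- The factors of the alphabet `A_q(x)`, in the order used by `schurAlph`. -/
lemma prod_alphabet {S : Type*} [CommRing S] (n N : ℕ)
    (F : MvPolynomial (Fin N) (Polynomial ℤ) → S) :
    ∏ t : Fin (n * N), F (alphabetVal n N (Prod.swap (finProdFinEquiv.symm t))) =
      ∏ i ∈ Finset.range N, ∏ j ∈ Finset.range n,
        F ((MvPolynomial.C Polynomial.X) ^ (2 * j) * varW N i) := by
  rw [Equiv.prod_comp finProdFinEquiv.symm (fun p : Fin n × Fin N =>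
    F (alphabetVal n N (Prod.swap p))), Fintype.prod_prod_type, Finset.prod_comm,
    Finset.prod_range]
  refine Finset.prod_congr rfl fun i _ => ?_
  rw [Finset.prod_range]
  refine Finset.prod_congr rfl fun j _ => ?_
  simp [alphabetVal, varW]

/-- The analogue of `schurPoly_eq_h` for the alphabet `A_q(x)`. -/
lemma schurAlph_eq_h {lam : YoungDiagram} {L : ℕ} (hL : lam.card ≤ L)
    {k : YoungDiagram → Polynomial ℤ}
    (hk : ∀ ρ ∈ ydEQ lam.card, ∑ α ∈ ydEQ lam.card,
      RF 1 Polynomial.X ⊥ (indW α.rowLen) L ρ * k α = if ρ = lam then 1 else 0)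
    (n N : ℕ) :
    ∃ H : PowerSeries (MvPolynomial (Fin N) (Polynomial ℤ)),
      H * ∏ i ∈ Finset.range N, ∏ j ∈ Finset.range n,
        (1 - PowerSeries.C ((MvPolynomial.C Polynomial.X) ^ (2 * j) * varW N i) *
          PowerSeries.X) = 1 ∧
      schurAlph n N lam = ∑ α ∈ ydEQ lam.card,
        MvPolynomial.C (k α) * ∏ i ∈ Finset.range L, PowerSeries.coeff (α.rowLen i) H := by
  obtain ⟨H, hH⟩ := exists_inverse (varW (n * N)) (n * N)
  set v : Fin (n * N) → MvPolynomial (Fin N) (Polynomial ℤ) :=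
    fun t => alphabetVal n N (Prod.swap (finProdFinEquiv.symm t)) with hv
  refine ⟨PowerSeries.map (MvPolynomial.aeval v : _ →ₐ[Polynomial ℤ] _).toRingHom H, ?_, ?_⟩
  · rw [← prod_alphabet n N (fun y => 1 - PowerSeries.C y * PowerSeries.X)]
    have h1 := congrArg
      (PowerSeries.map (MvPolynomial.aeval v : _ →ₐ[Polynomial ℤ] _).toRingHom) hH
    rw [map_mul, map_one, map_prod, Finset.prod_range] at h1
    refine Eq.trans ?_ h1
    congr 1
    refine Finset.prod_congr rfl fun t _ => ?_
    simp [varW, hv]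
  · rw [schurAlph, schurPoly_eq_h hL hk (n * N) H hH, map_sum]
    refine Finset.sum_congr rfl fun α _ => ?_
    rw [map_mul, map_prod, MvPolynomial.aeval_C]
    rfl

/-- The Schur expansion of `𝒢_{ν/μ}`, read off at the monomial with exponents `α`. -/
lemma coeff_expansion {n N' m : ℕ} {mu ν : YoungDiagram} {c : YoungDiagram → Polynomial ℤ}
    (h : ribbonFn n N' ν mu = ∑ᶠ rho ∈ {rho : YoungDiagram | rho.card = m},
      MvPolynomial.C (c rho) * schurPoly N' rho) (α : ℕ → ℕ) :
    RF n Polynomial.X mu (indW α) N' ν =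
      ∑ ρ ∈ ydEQ m, c ρ * RF 1 Polynomial.X ⊥ (indW α) N' ρ := by
  have hs : {rho : YoungDiagram | rho.card = m} = (ydEQ m : Set YoungDiagram) := by
    ext ρ; simp [mem_ydEQ]
  rw [hs, finsum_mem_coe_finset] at h
  rw [← coeff_ribbonFn, h, MvPolynomial.coeff_sum]
  refine Finset.sum_congr rfl fun ρ _ => ?_
  rw [MvPolynomial.coeff_C_mul, schurPoly, coeff_ribbonFn]

end Assembly

end RibbonLR

open RibbonLR

/-- the ribbon Littlewood–Richardson-type rule
`s_λ(A_q(x)) · 𝒢_μ(x;q) = Σ_ν c^λ_{ν/μ}(q) 𝒢_ν(x;q)`, summed over `ν ⊇ μ` with `ν/μ`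
tileable by `n`-ribbons and `|ν/μ| = n|λ|`.  The skew q-Littlewood–Richardson coefficients
`c ν ρ` are pinned down by the Schur expansions of the `𝒢_{ν/μ}` in `N' ≥ |λ|` variables. -/
theorem ribbon_littlewood_richardson (n N : ℕ) (hn : 1 ≤ n) (hN : 1 ≤ N)
    (lam mu : YoungDiagram)
    (N' : ℕ) (hN' : lam.card ≤ N')
    (c : YoungDiagram → YoungDiagram → Polynomial ℤ)
    (hc : ∀ nu : YoungDiagram, mu ≤ nu → Tileable n (nu.cells \ mu.cells) →
        nu.card = mu.card + n * lam.card →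
      ribbonFn n N' nu mu =
        ∑ᶠ rho ∈ {rho : YoungDiagram | rho.card = lam.card},
          MvPolynomial.C (c nu rho) * schurPoly N' rho) :
    schurAlph n N lam * G n N mu =
      ∑ᶠ nu ∈ {nu : YoungDiagram | mu ≤ nu ∧ Tileable n (nu.cells \ mu.cells) ∧
          nu.card = mu.card + n * lam.card},
        MvPolynomial.C (c nu lam) * G n N nu := by
  obtain ⟨k, hk⟩ := exists_inverse_kostka (Polynomial.X : Polynomial ℤ) lam hN'
  obtain ⟨H, hH, hS⟩ := schurAlph_eq_h hN' hk n N
  have hm : ∀ α ∈ ydEQ lam.card, ∑ i ∈ Finset.range N', α.rowLen i = lam.card := by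
    intro α hα
    rw [mem_ydEQ] at hα
    rw [sum_rowLen (by omega), hα]
  have hL : schurAlph n N lam * G n N mu = ∑ ν ∈ ydLE (mu.card + n * lam.card),
      MvPolynomial.C (∑ α ∈ ydEQ lam.card, k α *
        RF n Polynomial.X mu (indW α.rowLen) N' ν) * ribbonFn n N ν (nCore n mu) := by
    rw [hS, Finset.sum_mul]
    simp only [map_sum, Finset.sum_mul]
    rw [Finset.sum_comm]
    refine Finset.sum_congr rfl fun α hα => ?_
    rw [G, ribbonFn_eq_RF, mul_assoc, pieri_iterate hn _ (nCore_spec hn mu).2 (varW N) N H hH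
      α.rowLen N' mu (M := mu.card + n * lam.card) (by rw [hm α hα]), Finset.mul_sum]
    refine Finset.sum_congr rfl fun ν _ => ?_
    rw [map_mul, C_RF_ind, ribbonFn_eq_RF, mul_assoc]
  set A : Set YoungDiagram := {nu : YoungDiagram | mu ≤ nu ∧ Tileable n (nu.cells \ mu.cells) ∧
          nu.card = mu.card + n * lam.card} with hA
  have hR : ∑ᶠ nu ∈ A, MvPolynomial.C (c nu lam) * G n N nu =
      ∑ ν ∈ ydLE (mu.card + n * lam.card),
        if ν ∈ A then MvPolynomial.C (c ν lam) * G n N ν else 0 := by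
    have hs : A = ((ydLE (mu.card + n * lam.card)).filter (· ∈ A) : Set YoungDiagram) := by
      ext ν
      simp only [Finset.coe_filter, Set.mem_ofPred_eq, mem_ydLE]
      exact ⟨fun h => ⟨h.2.2.le, h⟩, fun h => h.2⟩
    rw [← Finset.sum_filter, ← finsum_mem_coe_finset]
    exact finsum_mem_congr hs fun _ _ => rfl
  rw [hL, hR]
  refine Finset.sum_congr rfl fun ν _ => ?_
  split_ifs with hν
  · -- The inverse Kostka row extracts the coefficient of the Schur polynomial indexed by `lam`.
    have h1 : ∑ α ∈ ydEQ lam.card, k α * RF n Polynomial.X mu (indW α.rowLen) N' ν =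
        c ν lam := by
      have h2 : ∀ α ∈ ydEQ lam.card, k α * RF n Polynomial.X mu (indW α.rowLen) N' ν =
          ∑ ρ ∈ ydEQ lam.card,
            c ν ρ * (RF 1 Polynomial.X ⊥ (indW α.rowLen) N' ρ * k α) := by
        intro α _
        rw [coeff_expansion (hc ν hν.1 hν.2.1 hν.2.2) α.rowLen, Finset.mul_sum]
        exact Finset.sum_congr rfl fun ρ _ => by ring
      rw [Finset.sum_congr rfl h2, Finset.sum_comm]
      simp only [← Finset.mul_sum]
      rw [Finset.sum_congr rfl fun ρ hρ => by rw [hk ρ hρ]]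
      simp [mem_ydEQ]
    by_cases h0 : c ν lam = 0
    · rw [h1, h0, map_zero, zero_mul, zero_mul]
    · -- A nonzero coefficient forces `ν` to reduce to `mu`, so that the two cores agree.
      rw [← h1] at h0
      obtain ⟨α, _, hne⟩ := Finset.exists_ne_zero_of_sum_ne_zero h0
      rw [h1, G, nCore_eq hn (RF_ind_support hn (right_ne_zero_of_mul hne)).2.2]
  · rw [Finset.sum_eq_zero, map_zero, zero_mul]
    intro α hα
    have : RF n Polynomial.X mu (indW α.rowLen) N' ν = (0 : Polynomial ℤ) := by
      by_contra h0
      obtain ⟨h1, h2, -⟩ := RF_ind_support hn h0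
      have h3 := RF_ind_card h0
      rw [hm α hα] at h3
      exact hν ⟨h1, h2, h3⟩
    rw [this, mul_zero]
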